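/- arXiv:math/0001068 — 9 statements merged into one kernel-verified Lean document; each statement's English description precedes it below -/
import Mathlib

section
/- Let 𝒪 = k[x₁,…,x_m] be a polynomial ring over a field k of characteristic zero and let 𝔥 ⊆ 𝔤 be ideals of 𝒪. Then the image of ∫_𝔥 𝔤 in the quotient ring 𝒪/𝔥 equals the primitive ideal ∫_0 (𝔤/𝔥) of the ideal 𝔤/𝔥 of 𝒪/𝔥 relative to the zero ideal, i.e. (∫_𝔥 𝔤)/𝔥 = {f̄ ∈ 𝔤/𝔥 : ξ(f̄) ∈ 𝔤/𝔥 for all k-derivations ξ of 𝒪/𝔥}. -/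
open Ideal

/-- `ξ ∈ Der_h(O)`: the derivation `ξ` preserves the ideal `h`. -/
def PreservesIdeal {k O : Type*} [CommRing k] [CommRing O] [Algebra k O]
    (h : Ideal O) (xi : Derivation k O O) : Prop :=
  ∀ x ∈ h, xi x ∈ h

/-- The primitive ideal `∫_h g` of `g` relative to `h`: all `f ∈ g` such that
`ξ f ∈ g` for every derivation `ξ` preserving `h`. -/
def primitiveIdeal (k : Type*) {O : Type*} [CommRing k] [CommRing O] [Algebra k O]
    (h g : Ideal O) : Ideal O where
  carrier := {f | f ∈ g ∧ ∀ xi : Derivation k O O, PreservesIdeal h xi → xi f ∈ g}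
  add_mem' := fun {a b} ha hb =>
    ⟨g.add_mem ha.1 hb.1, fun xi hxi => by
      rw [map_add]; exact g.add_mem (ha.2 xi hxi) (hb.2 xi hxi)⟩
  zero_mem' := ⟨g.zero_mem, fun xi _ => by simp⟩
  smul_mem' := fun c f hf =>
    ⟨g.smul_mem c hf.1, fun xi hxi => by
      rw [smul_eq_mul, Derivation.leibniz]
      exact g.add_mem (g.smul_mem _ (hf.2 xi hxi))
        (by rw [smul_eq_mul]; exact Ideal.mul_mem_right _ g hf.1)⟩

/-- The set of elements of `g` whose class in the conormal module `M = g/(g² + h)` is a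
torsion element over `O/g`, i.e. is killed by a non-zero-divisor of `O/g`.  This is the
preimage in `O` of the torsion submodule `T(M)` of `M`. -/
def torsionSet {O : Type*} [CommRing O] (h g : Ideal O) : Set O :=
  {f | f ∈ g ∧ ∃ β : O,
    Ideal.Quotient.mk g β ∈ nonZeroDivisors (O ⧸ g) ∧ β * f ∈ g ^ 2 ⊔ h}

/-- A derivation preserving the ideal `h` induces a derivation of the quotient by `h`. -/
theorem PreservesIdeal.exists_quotient_derivation {k O : Type*} [CommRing k] [CommRing O]
    [Algebra k O] {h : Ideal O} {xi : Derivation k O O} (hxi : PreservesIdeal h xi) :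
    ∃ eta : Derivation k (O ⧸ h) (O ⧸ h),
      ∀ f, eta (Ideal.Quotient.mk h f) = Ideal.Quotient.mk h (xi f) := by
  let L : (O ⧸ h) →ₗ[k] (O ⧸ h) :=
    { toFun := Quotient.lift (fun f => Ideal.Quotient.mk h (xi f)) fun a b hab => by
        rw [Ideal.Quotient.mk_eq_mk_iff_sub_mem, ← map_sub]
        exact hxi _ ((Submodule.quotientRel_def h).mp hab)
      map_add' := by
        intro a b
        obtain ⟨a, rfl⟩ := Ideal.Quotient.mk_surjective a
        obtain ⟨b, rfl⟩ := Ideal.Quotient.mk_surjective b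
        change Ideal.Quotient.mk h (xi (a + b)) =
          Ideal.Quotient.mk h (xi a) + Ideal.Quotient.mk h (xi b)
        rw [map_add, map_add]
      map_smul' := by
        intro c a
        obtain ⟨a, rfl⟩ := Ideal.Quotient.mk_surjective a
        change Ideal.Quotient.mk h (xi (c • a)) = c • Ideal.Quotient.mk h (xi a)
        rw [Derivation.map_smul]
        rfl }
  refine ⟨Derivation.mk' L ?_, fun f => rfl⟩
  intro a b
  obtain ⟨a, rfl⟩ := Ideal.Quotient.mk_surjective a
  obtain ⟨b, rfl⟩ := Ideal.Quotient.mk_surjective b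
  change Ideal.Quotient.mk h (xi (a * b)) =
    Ideal.Quotient.mk h a * Ideal.Quotient.mk h (xi b) +
      Ideal.Quotient.mk h b * Ideal.Quotient.mk h (xi a)
  rw [Derivation.leibniz, map_add, smul_eq_mul, smul_eq_mul, map_mul, map_mul]

/-- Every derivation of a quotient of a polynomial ring lifts to the polynomial ring. -/
theorem MvPolynomial.exists_derivation_lift {k σ : Type*} [CommRing k]
    {h : Ideal (MvPolynomial σ k)}
    (eta : Derivation k (MvPolynomial σ k ⧸ h) (MvPolynomial σ k ⧸ h)) :
    ∃ xi : Derivation k (MvPolynomial σ k) (MvPolynomial σ k),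
      ∀ f, Ideal.Quotient.mk h (xi f) = eta (Ideal.Quotient.mk h f) := by
  choose a ha using fun i => Ideal.Quotient.mk_surjective (eta (Ideal.Quotient.mk h (X i)))
  refine ⟨mkDerivation k a, fun f => ?_⟩
  induction f using MvPolynomial.induction_on with
  | C c =>
    rw [derivation_C, map_zero]
    exact (eta.map_algebraMap c).symm
  | add p q hp hq => simp only [map_add, hp, hq]
  | mul_X p i hp =>
    simp only [Derivation.leibniz, map_add, map_mul, smul_eq_mul, hp, mkDerivation_X, ha]

/-- In a polynomial ring over a field of characteristic zero, the image of `∫_h g` in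
`O/h` is the primitive ideal of `g/h` relative to the zero ideal. -/
theorem statement2 {k : Type*} [Field k] [CharZero k] {m : ℕ}
    (h g : Ideal (MvPolynomial (Fin m) k)) (hle : h ≤ g) :
    (primitiveIdeal k h g).map (Ideal.Quotient.mk h) =
      primitiveIdeal k (⊥ : Ideal (MvPolynomial (Fin m) k ⧸ h))
        (g.map (Ideal.Quotient.mk h)) := by
  apply le_antisymm
  · rw [Ideal.map_le_iff_le_comap]
    rintro f ⟨hf, hder⟩
    refine ⟨Ideal.mem_map_of_mem _ hf, fun eta _ => ?_⟩
    obtain ⟨xi, hxi⟩ := MvPolynomial.exists_derivation_lift eta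
    rw [← hxi]
    refine Ideal.mem_map_of_mem _ (hder xi fun x hx => ?_)
    rw [← Ideal.Quotient.eq_zero_iff_mem, hxi, Ideal.Quotient.eq_zero_iff_mem.mpr hx, map_zero]
  · rintro f ⟨hf, hder⟩
    obtain ⟨f, rfl⟩ := Ideal.Quotient.mk_surjective f
    refine Ideal.mem_map_of_mem _ ⟨(Ideal.mem_quotient_iff_mem hle).mp hf, fun xi hxi => ?_⟩
    obtain ⟨eta, heta⟩ := hxi.exists_quotient_derivation
    rw [← Ideal.mem_quotient_iff_mem hle, ← heta]
    refine hder eta fun x hx => ?_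
    rw [Ideal.mem_bot] at hx ⊢
    rw [hx, map_zero]
end

section
/- Let 𝒪 be a commutative noetherian algebra of finite type over a commutative ring k, and let 𝔥 ⊆ 𝔤 be ideals of 𝒪 having no embedded primes. Then for any multiplicative set S ⊆ 𝒪, the localization S⁻¹(∫_𝔥 𝔤) is equal to the primitive ideal ∫_{S⁻¹𝔥} (S⁻¹𝔤) of S⁻¹𝔤 relative to S⁻¹𝔥 in the ring S⁻¹𝒪. -/
open Ideal

/-- An ideal is unmixed (has no embedded primes): every associated prime of `O/I` is a
minimal prime of `I`. -/
def IsUnmixed {O : Type*} [CommRing O] (I : Ideal O) : Prop :=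
  associatedPrimes O (O ⧸ I) ⊆ I.minimalPrimes

/-- If every element of a finitely generated ideal `J` lies in `I` after localizing at `S`, then a
single element of `S` multiplies `J` into `I`. -/
lemma exists_forall_mul_mem_of_algebraMap_mem_map {O : Type*} [CommRing O] (S : Submonoid O)
    (L : Type*) [CommRing L] [Algebra O L] [IsLocalization S L] (I : Ideal O) {J : Ideal O}
    (hJ : J.FG) (hJI : ∀ x ∈ J, algebraMap O L x ∈ I.map (algebraMap O L)) :
    ∃ s ∈ S, ∀ x ∈ J, s * x ∈ I := by
  induction J, hJ using Submodule.fg_induction with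
  | singleton a =>
    obtain ⟨s, hs, hsa⟩ := (IsLocalization.algebraMap_mem_map_algebraMap_iff S L I a).1
      (hJI a (Submodule.mem_span_singleton_self a))
    refine ⟨s, hs, fun x hx => ?_⟩
    obtain ⟨c, rfl⟩ := Submodule.mem_span_singleton.1 hx
    rw [smul_eq_mul, mul_left_comm]
    exact I.mul_mem_left c hsa
  | sup J₁ J₂ _ _ ih₁ ih₂ =>
    obtain ⟨s, hs, h₁⟩ := ih₁ fun x hx => hJI x (Submodule.mem_sup_left hx)
    obtain ⟨t, ht, h₂⟩ := ih₂ fun x hx => hJI x (Submodule.mem_sup_right hx)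
    refine ⟨s * t, S.mul_mem hs ht, fun x hx => ?_⟩
    obtain ⟨y, hy, z, hz, rfl⟩ := Submodule.mem_sup.1 hx
    rw [mul_add, mul_right_comm, mul_assoc s t z]
    exact I.add_mem (I.mul_mem_right t (h₁ y hy)) (I.mul_mem_left s (h₂ z hz))

/-- A variant of `exists_forall_mul_mem_of_algebraMap_mem_map` for an arbitrary subset of a
noetherian ring. -/
lemma exists_forall_mul_mem_of_subset {O : Type*} [CommRing O] [IsNoetherianRing O]
    (S : Submonoid O) (L : Type*) [CommRing L] [Algebra O L] [IsLocalization S L] (I : Ideal O)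
    (A : Set O) (hA : ∀ x ∈ A, algebraMap O L x ∈ I.map (algebraMap O L)) :
    ∃ s ∈ S, ∀ x ∈ A, s * x ∈ I := by
  have hspan : Ideal.span A ≤ (I.map (algebraMap O L)).comap (algebraMap O L) :=
    Ideal.span_le.2 hA
  obtain ⟨s, hs, hsA⟩ := exists_forall_mul_mem_of_algebraMap_mem_map S L I
    (IsNoetherian.noetherian (Ideal.span A)) hspan
  exact ⟨s, hs, fun x hx => hsA x (Ideal.subset_span hx)⟩

/-- A derivation of a ring extends to every localization. -/
lemma Derivation.exists_extension_of_isLocalization {k O : Type*} [CommRing k] [CommRing O] [Algebra k O]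
    (S : Submonoid O) {L : Type*} [CommRing L] [Algebra O L] [IsLocalization S L] [Algebra k L]
    [IsScalarTower k O L] (xi : Derivation k O O) :
    ∃ eta : Derivation k L L, ∀ x, eta (algebraMap O L x) = algebraMap O L (xi x) := by
  let φ : Ω[O⁄k] →ₗ[O] L := Algebra.linearMap O L ∘ₗ xi.liftKaehlerDifferential
  have hunit : ∀ s : S, IsUnit (algebraMap O (Module.End O L) s) :=
    IsLocalizedModule.map_units (Algebra.linearMap O L)
  let ψ : Ω[L⁄k] →ₗ[O] L := IsLocalizedModule.lift S (KaehlerDifferential.map k k O L) φ hunit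
  refine ⟨(ψ.extendScalarsOfIsLocalization S L).compDer (KaehlerDifferential.D k L), fun x => ?_⟩
  have hψ := IsLocalizedModule.lift_apply S (KaehlerDifferential.map k k O L) φ hunit
    (KaehlerDifferential.D k O x)
  rw [KaehlerDifferential.map_D] at hψ
  simpa [φ] using hψ

/-- Up to a denominator, a derivation of a localization of a noetherian algebra of finite type
comes from a derivation of the algebra. -/
lemma Derivation.exists_algebraMap_eq_mul_of_isLocalization {k O : Type*} [CommRing k] [CommRing O] [Algebra k O]
    [IsNoetherianRing O] [Algebra.FiniteType k O]
    (S : Submonoid O) {L : Type*} [CommRing L] [Algebra O L] [IsLocalization S L] [Algebra k L]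
    [IsScalarTower k O L] (eta : Derivation k L L) :
    ∃ s ∈ S, ∃ xi : Derivation k O O,
      ∀ x, algebraMap O L (xi x) = algebraMap O L s * eta (algebraMap O L x) := by
  have : Module.FinitePresentation O Ω[O⁄k] := Module.finitePresentation_of_finite O _
  obtain ⟨φ, s, hφ⟩ := Module.FinitePresentation.exists_lift_of_isLocalizedModule S
    (Algebra.linearMap O L) (eta.compAlgebraMap O).liftKaehlerDifferential
  refine ⟨s, s.2, φ.compDer (KaehlerDifferential.D k O), fun x => ?_⟩
  have hx := LinearMap.congr_fun hφ (KaehlerDifferential.D k O x)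
  simpa [Submonoid.smul_def, Algebra.smul_def] using hx

/-- An extension of a derivation preserving `h` preserves the extension of `h`. -/
lemma PreservesIdeal.map {k O : Type*} [CommRing k] [CommRing O] [Algebra k O]
    {L : Type*} [CommRing L] [Algebra O L] [Algebra k L] {h : Ideal O}
    {xi : Derivation k O O} (hxi : PreservesIdeal h xi)
    {eta : Derivation k L L} (heta : ∀ x, eta (algebraMap O L x) = algebraMap O L (xi x)) :
    PreservesIdeal (h.map (algebraMap O L)) eta := by
  intro y hy
  induction hy using Submodule.span_induction with
  | mem y hy =>
    obtain ⟨x, hx, rfl⟩ := hy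
    rw [heta]
    exact Ideal.mem_map_of_mem _ (hxi x hx)
  | zero => simp
  | add y z _ _ ihy ihz =>
    rw [map_add]
    exact Ideal.add_mem _ ihy ihz
  | smul c y hy ih =>
    rw [smul_eq_mul, Derivation.leibniz]
    exact Ideal.add_mem _ (Ideal.mul_mem_left _ c ih) (Ideal.mul_mem_right _ _ hy)

lemma map_primitiveIdeal_le {k O : Type*} [CommRing k] [CommRing O] [Algebra k O]
    [IsNoetherianRing O] [Algebra.FiniteType k O]
    (S : Submonoid O) {L : Type*} [CommRing L] [Algebra O L] [IsLocalization S L] [Algebra k L]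
    [IsScalarTower k O L] (h g : Ideal O) :
    (primitiveIdeal k h g).map (algebraMap O L) ≤
      primitiveIdeal k (h.map (algebraMap O L)) (g.map (algebraMap O L)) := by
  refine Ideal.map_le_iff_le_comap.2 fun f hf => ⟨Ideal.mem_map_of_mem _ hf.1, fun eta heta => ?_⟩
  obtain ⟨s, hs, xi, hxi⟩ := eta.exists_algebraMap_eq_mul_of_isLocalization S
  obtain ⟨t, ht, hth⟩ := exists_forall_mul_mem_of_subset S L h (xi '' h) (by
    rintro _ ⟨x, hx, rfl⟩
    rw [hxi]
    exact Ideal.mul_mem_left _ _ (heta _ (Ideal.mem_map_of_mem _ hx)))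
  have hmem : (t • xi) f ∈ g := hf.2 (t • xi) fun x hx => hth _ ⟨x, hx, rfl⟩
  have hmap := Ideal.mem_map_of_mem (algebraMap O L) hmem
  rw [Derivation.smul_apply, smul_eq_mul, map_mul, hxi,
    Ideal.unit_mul_mem_iff_mem _ (IsLocalization.map_units L (⟨t, ht⟩ : S)),
    Ideal.unit_mul_mem_iff_mem _ (IsLocalization.map_units L (⟨s, hs⟩ : S))] at hmap
  exact hmap

lemma primitiveIdeal_map_le {k O : Type*} [CommRing k] [CommRing O] [Algebra k O]
    [IsNoetherianRing O]
    (S : Submonoid O) {L : Type*} [CommRing L] [Algebra O L] [IsLocalization S L] [Algebra k L]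
    [IsScalarTower k O L] (h g : Ideal O) :
    primitiveIdeal k (h.map (algebraMap O L)) (g.map (algebraMap O L)) ≤
      (primitiveIdeal k h g).map (algebraMap O L) := by
  intro y hy
  obtain ⟨a, s, rfl⟩ := IsLocalization.exists_mk'_eq S y
  have ha : algebraMap O L a ∈
      primitiveIdeal k (h.map (algebraMap O L)) (g.map (algebraMap O L)) := by
    rw [← IsLocalization.mk'_spec' L a s]
    exact Ideal.mul_mem_left _ _ hy
  obtain ⟨r, hr, hra⟩ := (IsLocalization.algebraMap_mem_map_algebraMap_iff S L g a).1 ha.1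
  obtain ⟨t, ht, hta⟩ := exists_forall_mul_mem_of_subset S L g
    {b | ∃ xi : Derivation k O O, PreservesIdeal h xi ∧ xi a = b} (by
      rintro _ ⟨xi, hxi, rfl⟩
      obtain ⟨eta, heta⟩ := xi.exists_extension_of_isLocalization S (L := L)
      rw [← heta]
      exact ha.2 eta (hxi.map heta))
  rw [IsLocalization.mk'_mem_map_algebraMap_iff]
  refine ⟨t * r * r, S.mul_mem (S.mul_mem ht hr) hr, ?_, fun xi hxi => ?_⟩
  · rw [mul_assoc]
    exact g.mul_mem_left _ hra
  · have hxia : t * xi a ∈ g := hta _ ⟨xi, hxi, rfl⟩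
    have heq : xi (t * r * r * a) =
        r * r * (t * xi a) + (r * xi t + 2 * t * xi r) * (r * a) := by
      simp only [Derivation.leibniz, smul_eq_mul]
      ring
    rw [heq]
    exact g.add_mem (g.mul_mem_left _ hxia) (g.mul_mem_left _ hra)

/-- The primitive ideal localizes for ideals without embedded primes. -/
theorem statement3 {k O : Type*} [CommRing k] [CommRing O] [Algebra k O]
    [IsNoetherianRing O] [Algebra.FiniteType k O]
    (h g : Ideal O) (hle : h ≤ g) (hh : IsUnmixed h) (hg : IsUnmixed g)
    (S : Submonoid O) (L : Type*) [CommRing L] [Algebra O L] [IsLocalization S L]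
    [Algebra k L] [IsScalarTower k O L] :
    (primitiveIdeal k h g).map (algebraMap O L) =
      primitiveIdeal k (h.map (algebraMap O L)) (g.map (algebraMap O L)) := by
  exact le_antisymm (map_primitiveIdeal_le S h g) (primitiveIdeal_map_le S h g)
end

section
/- Let 𝒪 be a polynomial ring over a field k of characteristic zero and let 𝔥 ⊆ 𝔤 be unmixed ideals of 𝒪 with 𝔤 radical, such that the localization of 𝒪/𝔥 at (the image of) every minimal prime of 𝔤 is a regular local ring (equivalently, the Jacobian ideal 𝒥(𝔥) of 𝔥 is not contained in any minimal prime of 𝒪/𝔤). Then the torsion submodule of the conormal module M = 𝔤/(𝔤² + 𝔥) is T(M) = (∫_𝔥 𝔤)/(𝔤² + 𝔥); consequently there is a short exact sequence of 𝒪/𝔤-modules 0 → T(M) → M → 𝔤/∫_𝔥 𝔤 → 0. -/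
open Ideal

/-- A regular local ring: a noetherian local ring whose maximal ideal can be generated by
Krull-dimension many elements. -/
def IsRegularLocal (R : Type*) [CommRing R] : Prop :=
  IsNoetherianRing R ∧ IsLocalRing R ∧ ∃ s : Finset R,
    (Ideal.span (s : Set R)).IsMaximal ∧ (s.card : WithBot ℕ∞) = ringKrullDim R

/-- The localization of `R` at a prime ideal (with the primality assumption explicit). -/
abbrev locAt {R : Type*} [CommRing R] (q : Ideal R) (hq : q.IsPrime) : Type _ :=
  @Localization.AtPrime R _ q hq

/-- The localization of `O/h` at the image of the prime `p` is a regular local ring. -/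
def regularAtImage {O : Type*} [CommRing O] (h p : Ideal O) : Prop :=
  ∀ hP : (p.map (Ideal.Quotient.mk h)).IsPrime,
    IsRegularLocal (locAt (p.map (Ideal.Quotient.mk h)) hP)

open IsLocalRing

theorem exists_prime_ge_le_ringKrullDim_quotient {A : Type*} [CommRing A] {J : Ideal A} {d : ℕ}
    (hd : (d : WithBot ℕ∞) ≤ ringKrullDim (A ⧸ J)) :
    ∃ Q : Ideal A, Q.IsPrime ∧ J ≤ Q ∧ (d : WithBot ℕ∞) ≤ ringKrullDim (A ⧸ Q) := by
  rw [ringKrullDim_quotient, Order.le_krullDim_iff] at hd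
  obtain ⟨l, hl⟩ := hd
  refine ⟨l.head.1.asIdeal, l.head.1.isPrime, l.head.2, ?_⟩
  rw [ringKrullDim_quotient, Order.le_krullDim_iff]
  refine ⟨⟨l.length, fun i => ⟨(l i).1, ?_⟩, fun i => l.step i⟩, hl⟩
  have h : l.head.1 ≤ (l i).1 := l.head_le i
  exact h

theorem ringKrullDim_quotient_le_sup_span_singleton {A : Type*} [CommRing A] [IsLocalRing A]
    [IsNoetherianRing A] (Q : Ideal A) [Q.IsPrime] {a : A} (ha : a ∈ maximalIdeal A) :
    ringKrullDim (A ⧸ Q) ≤ ringKrullDim (A ⧸ (Q ⊔ span {a})) + 1 := by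
  have hloc : IsLocalRing (A ⧸ Q) := .of_surjective' _ Ideal.Quotient.mk_surjective
  have hmem : Ideal.Quotient.mk Q a ∈ maximalIdeal (A ⧸ Q) := by
    have : IsLocalHom (Ideal.Quotient.mk Q) :=
      IsLocalHom.of_surjective _ Ideal.Quotient.mk_surjective
    exact ((mem_maximalIdeal _).mpr fun h => (mem_maximalIdeal _).mp ha
      (isUnit_of_map_unit (Ideal.Quotient.mk Q) a h))
  have h1 := ringKrullDim_le_ringKrullDim_quotient_add_card {Ideal.Quotient.mk Q a}
    (by simpa [IsLocalRing.ringJacobson_eq_maximalIdeal] using hmem)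
  have e : ((A ⧸ Q) ⧸ (span {a}).map (Ideal.Quotient.mk Q)) ≃+* A ⧸ (Q ⊔ span {a}) :=
    DoubleQuot.quotQuotEquivQuotSup Q (span {a})
  rw [← ringKrullDim_eq_of_ringEquiv e, Ideal.map_span, Set.image_singleton]
  rw [Finset.coe_singleton, Finset.card_singleton, Nat.cast_one] at h1
  exact h1

/-- If `I ≤ J`, the maximal ideal is generated by `I` and at most `d` further elements, and `A ⧸ J`
has dimension at least `d`, then `I = J`. -/
theorem le_of_card_le_ringKrullDim_quotient {A : Type*} [CommRing A] [IsLocalRing A]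
    [IsNoetherianRing A] (d : ℕ) (s : Finset A) (I J : Ideal A) (hIJ : I ≤ J)
    (hs : I ⊔ span (s : Set A) = maximalIdeal A) (hsd : s.card ≤ d)
    (hd : (d : WithBot ℕ∞) ≤ ringKrullDim (A ⧸ J)) : J ≤ I := by
  classical
  induction d generalizing s I J with
  | zero =>
    obtain rfl : s = ∅ := Finset.card_eq_zero.mp (Nat.le_zero.mp hsd)
    obtain ⟨Q, hQ, hJQ, -⟩ := exists_prime_ge_le_ringKrullDim_quotient hd
    have : I = maximalIdeal A := by simpa using hs
    exact this ▸ hJQ.trans (le_maximalIdeal hQ.ne_top)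
  | succ d ih =>
    obtain ⟨Q, hQ, hJQ, hdQ⟩ := exists_prime_ge_le_ringKrullDim_quotient hd
    have hQm : Q ≤ maximalIdeal A := le_maximalIdeal hQ.ne_top
    refine hJQ.trans ?_
    obtain ⟨a, has, haQ⟩ : ∃ a ∈ s, a ∉ Q := by
      by_contra! hsQ
      have hmax : Q = maximalIdeal A :=
        le_antisymm hQm (hs ▸ sup_le (hIJ.trans hJQ) (span_le.mpr hsQ))
      have hmax' : Q.IsMaximal := hmax ▸ maximalIdeal.isMaximal A
      let := Ideal.Quotient.field Q
      rw [ringKrullDim_eq_zero_of_field] at hdQ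
      exact absurd hdQ (by norm_cast)
    have ham : a ∈ maximalIdeal A := hs ▸ (le_sup_right (a := I)) (subset_span has)
    have hle : Q ⊔ span {a} ≤ I ⊔ span {a} := by
      refine ih (s.erase a) (I ⊔ span {a}) (Q ⊔ span {a})
        (sup_le_sup_right (hIJ.trans hJQ) _) ?_ ?_ ?_
      · rw [sup_assoc, ← span_union, ← hs]
        congr 2
        rw [← Finset.coe_singleton, ← Finset.coe_union]
        congr 1
        ext; simp; grind
      · rw [Finset.card_erase_of_mem has]; omega
      · have := hdQ.trans (ringKrullDim_quotient_le_sup_span_singleton Q ham)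
        push_cast at this
        exact ENat.WithBot.add_le_add_one_right_iff.mp this
    refine Submodule.le_of_le_smul_of_le_jacobson_bot (I := maximalIdeal A)
      (IsNoetherian.noetherian Q) (maximalIdeal_le_jacobson _) fun q hq => ?_
    obtain ⟨i, hi, z', hz', rfl⟩ := Submodule.mem_sup.mp (hle (Ideal.mem_sup_left hq))
    obtain ⟨z, rfl⟩ := Ideal.mem_span_singleton'.mp hz'
    have hz : z * a ∈ Q := (Ideal.add_mem_iff_right _ (hJQ (hIJ hi))).mp hq
    exact Submodule.add_mem_sup hi (mul_comm z a ▸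
      Submodule.smul_mem_smul ham ((hQ.mem_or_mem hz).resolve_right haQ))

/-- First-order Taylor formula for two algebra maps which agree modulo a square-zero ideal. -/
theorem MvPolynomial.aeval_sub_aeval_eq_sum_pderiv {k A σ : Type*} [CommRing k] [CommRing A]
    [Algebra k A] [Fintype σ] (I : Ideal A) (hI : I ^ 2 = ⊥) (φ ψ : MvPolynomial σ k →ₐ[k] A)
    (hφψ : ∀ F, φ F - ψ F ∈ I) (F : MvPolynomial σ k) :
    φ F - ψ F = ∑ i, φ (pderiv i F) * (φ (X i) - ψ (X i)) := by
  classical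
  induction F using MvPolynomial.induction_on with
  | C a => simp [← MvPolynomial.algebraMap_eq]
  | add F G hF hG =>
    simp only [map_add, add_mul, Finset.sum_add_distrib, ← hF, ← hG]; ring
  | mul_X F j hF =>
    have hz : (φ F - ψ F) * (φ (X j) - ψ (X j)) = 0 := by
      rw [← Ideal.mem_bot, ← hI, pow_two]
      exact Ideal.mul_mem_mul (hφψ _) (hφψ _)
    have hsum : ∑ i, φ (pderiv i (F * X j)) * (φ (X i) - ψ (X i)) =
        φ (X j) * (φ F - ψ F) + φ F * (φ (X j) - ψ (X j)) := by
      simp only [Derivation.leibniz, pderiv_X, smul_eq_mul, map_add, map_mul, add_mul,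
        Finset.sum_add_distrib, hF, Finset.mul_sum, mul_assoc]
      rw [add_comm]
      congr 1
      rw [Finset.sum_eq_single j]
      · simp
      · intro i _ hij
        simp [hij.symm]
      · simp
    rw [hsum, map_mul, map_mul]
    linear_combination -hz

/-- In characteristic zero, a polynomial in `p` all of whose partial derivatives lie in `p` lies in
the square of the maximal ideal of the localization at `p`. -/
theorem MvPolynomial.algebraMap_mem_maximalIdeal_sq {k : Type*} [Field k] [CharZero k] {m : ℕ}
    (p : Ideal (MvPolynomial (Fin m) k)) [p.IsPrime] (R : Type*) [CommRing R] [IsLocalRing R]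
    [Algebra k R] [Algebra (MvPolynomial (Fin m) k) R] [IsScalarTower k (MvPolynomial (Fin m) k) R]
    [IsLocalization.AtPrime R p]
    {F : MvPolynomial (Fin m) k} (hF : F ∈ p)
    (hdF : ∀ i, pderiv i F ∈ p) :
    algebraMap _ R F ∈ maximalIdeal R ^ 2 := by
  let M : Ideal R := maximalIdeal R
  have : Algebra.EssFiniteType (MvPolynomial (Fin m) k) R := .of_isLocalization R p.primeCompl
  have : Algebra.EssFiniteType k R := .comp k (MvPolynomial (Fin m) k) R
  have : Algebra.EssFiniteType k (ResidueField R) := .comp k R (ResidueField R)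
  let g : R ⧸ M ^ 2 →ₐ[k] ResidueField R :=
    Ideal.Quotient.liftₐ (M ^ 2) (IsScalarTower.toAlgHom k R (ResidueField R)) fun a ha =>
      (residue_eq_zero_iff a).mpr (Ideal.pow_le_self two_ne_zero ha)
  have hg : Function.Surjective g := fun y => by
    obtain ⟨x, rfl⟩ := residue_surjective y
    exact ⟨Ideal.Quotient.mk _ x, rfl⟩
  have hker : RingHom.ker (g : R ⧸ M ^ 2 →+* ResidueField R) ^ 2 = ⊥ := by
    have : RingHom.ker (g : R ⧸ M ^ 2 →+* ResidueField R) ≤ M.map (Ideal.Quotient.mk (M ^ 2)) := by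
      intro y hy
      obtain ⟨x, rfl⟩ := Ideal.Quotient.mk_surjective y
      exact Ideal.mem_map_of_mem _ ((residue_eq_zero_iff x).mp hy)
    rw [eq_bot_iff]
    refine (Ideal.pow_right_mono this 2).trans ?_
    exact (Ideal.map_pow _ _ _).symm.trans_le (Ideal.map_quotient_self _).le
  let s := Algebra.FormallySmooth.liftOfSurjective (AlgHom.id k (ResidueField R)) g hg ⟨2, hker⟩
  have hs : ∀ x, g (s x) = x := fun x =>
    Algebra.FormallySmooth.liftOfSurjective_apply (AlgHom.id k (ResidueField R)) g hg ⟨2, hker⟩ x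
  let φ : MvPolynomial (Fin m) k →ₐ[k] R ⧸ M ^ 2 :=
    (Ideal.Quotient.mkₐ k (M ^ 2)).comp (IsScalarTower.toAlgHom k _ R)
  have hp : ∀ G ∈ p, g (φ G) = 0 := fun G hG => (residue_eq_zero_iff _).mpr
    ((IsLocalization.AtPrime.to_map_mem_maximal_iff R p G).mpr hG)
  have key := aeval_sub_aeval_eq_sum_pderiv _ hker φ (s.comp (g.comp φ))
    (fun G => by simp [RingHom.mem_ker, hs]) F
  have hzero : φ F = 0 := by
    have h1 : (s.comp (g.comp φ)) F = 0 := by simp [hp F hF]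
    rw [h1, sub_zero] at key
    rw [key]
    refine Finset.sum_eq_zero fun i _ => ?_
    rw [← Ideal.mem_bot, ← hker]
    refine (pow_two (RingHom.ker (g : R ⧸ M ^ 2 →+* ResidueField R))).symm.le ?_
    exact Ideal.mul_mem_mul (hp _ (hdF i)) (by simp [RingHom.mem_ker, hs])
  exact Ideal.Quotient.eq_zero_iff_mem.mp hzero

/-- Polynomials in `p` with linearly independent classes in the cotangent space at `p` have linearly
independent gradients over the residue field. -/
theorem MvPolynomial.linearIndependent_pderiv {k : Type*} [Field k] [CharZero k] {m : ℕ}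
    (p : Ideal (MvPolynomial (Fin m) k)) [p.IsPrime] (R : Type*) [CommRing R] [IsLocalRing R]
    [Algebra k R] [Algebra (MvPolynomial (Fin m) k) R] [IsScalarTower k (MvPolynomial (Fin m) k) R]
    [IsLocalization.AtPrime R p]
    {ι : Type*} [Fintype ι]
    (F : ι → MvPolynomial (Fin m) k) (hF : ∀ a, F a ∈ p)
    (hli : LinearIndependent (ResidueField R) (fun a =>
      ((maximalIdeal R).toCotangent ⟨algebraMap _ R (F a),
        (IsLocalization.AtPrime.to_map_mem_maximal_iff R p _).mpr (hF a)⟩ :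
        CotangentSpace R))) :
    LinearIndependent (ResidueField R) (fun a i =>
      residue R (algebraMap _ _ (pderiv i (F a)))) := by
  rw [Fintype.linearIndependent_iff] at hli ⊢
  intro c hc
  choose r hr using fun a => residue_surjective (c a)
  obtain ⟨s, hs⟩ := IsLocalization.exist_integer_multiples_of_finite p.primeCompl r
  choose C hC using hs
  have hunit : IsUnit (algebraMap (MvPolynomial (Fin m) k) R s) := IsLocalization.map_units R s
  have hC' : ∀ a, algebraMap _ R (C a) =
      algebraMap (MvPolynomial (Fin m) k) R s * r a := fun a => by
    rw [hC, Algebra.smul_def]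
  have hmem : ∀ G, G ∈ p ↔ residue R (algebraMap _ R G) = 0 := fun G => by
    rw [residue_eq_zero_iff]
    exact (IsLocalization.AtPrime.to_map_mem_maximal_iff R p G).symm
  have hG := algebraMap_mem_maximalIdeal_sq p R (F := ∑ a, C a * F a)
    (sum_mem fun a _ => p.mul_mem_left _ (hF a)) fun i => by
      rw [hmem]
      have hci := congrFun hc i
      simp only [Finset.sum_apply, Pi.smul_apply, smul_eq_mul, Pi.zero_apply] at hci
      simp only [map_sum, Derivation.leibniz, smul_eq_mul, map_add, map_mul, hC', hr,
        (hmem _).mp (hF _), zero_mul, add_zero, mul_assoc, ← Finset.mul_sum, hci, mul_zero]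
  have hsum : ∑ a, r a * algebraMap _ R (F a) ∈ maximalIdeal R ^ 2 := by
    rw [map_sum] at hG
    simp only [map_mul, hC', mul_assoc, ← Finset.mul_sum] at hG
    exact (Ideal.unit_mul_mem_iff_mem _ hunit).mp hG
  apply hli
  have hFm : ∀ a, algebraMap _ R (F a) ∈ maximalIdeal R := fun a =>
    (IsLocalization.AtPrime.to_map_mem_maximal_iff R p _).mpr (hF a)
  have hz : (maximalIdeal R).toCotangent (∑ a, r a • ⟨algebraMap _ R (F a), hFm a⟩) = 0 := by
    rw [Ideal.toCotangent_eq_zero]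
    simpa using hsum
  rw [map_sum] at hz
  rw [← hz]
  refine Finset.sum_congr rfl fun a _ => ?_
  rw [map_smul, ← hr a]
  exact algebraMap_smul (ResidueField R) (r a) _

theorem IsLocalRing.exists_mulVec_eq_of_linearIndependent_residue {R ι n : Type*} [CommRing R]
    [IsLocalRing R] [Fintype ι] [Fintype n] (A : Matrix ι n R)
    (hA : LinearIndependent (ResidueField R) (A.map (residue R)).row) (u : ι → R) :
    ∃ v : n → R, A.mulVec v = u := by
  classical
  have hsurj : LinearMap.range (A.map (residue R)).mulVecLin = ⊤ := by
    apply Submodule.eq_top_of_finrank_eq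
    rw [Module.finrank_fintype_fun_eq_card]
    exact hA.rank_matrix
  suffices h : ⊤ ≤ LinearMap.range A.mulVecLin from h (Submodule.mem_top (x := u))
  refine Submodule.le_of_le_smul_of_le_jacobson_bot (I := maximalIdeal R)
    (Module.finite_def.mp inferInstance) (maximalIdeal_le_jacobson _) fun w _ => ?_
  obtain ⟨v, hv⟩ := LinearMap.range_eq_top.mp hsurj (residue R ∘ w)
  choose v' hv' using fun i => residue_surjective (v i)
  obtain rfl : residue R ∘ v' = v := funext hv'
  have hw : w = A.mulVec v' + (w - A.mulVec v') := by abel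
  rw [hw]
  refine Submodule.add_mem_sup ⟨v', rfl⟩ ?_
  rw [pi_eq_sum_univ' (w - A.mulVec v')]
  refine sum_mem fun i _ => Submodule.smul_mem_smul ?_ trivial
  have := congrFun hv i
  rw [← residue_eq_zero_iff, Pi.sub_apply, map_sub, sub_eq_zero, RingHom.map_mulVec]
  exact this.symm

theorem MvPolynomial.exists_derivation_notMem {k : Type*} [Field k] [CharZero k] {m : ℕ}
    (p : Ideal (MvPolynomial (Fin m) k)) [p.IsPrime] (R : Type*) [CommRing R] [IsLocalRing R]
    [Algebra k R] [Algebra (MvPolynomial (Fin m) k) R] [IsScalarTower k (MvPolynomial (Fin m) k) R]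
    [IsLocalization.AtPrime R p]
    {ι : Type*} [Fintype ι] (a₀ : ι)
    (F : ι → MvPolynomial (Fin m) k) (hF : ∀ a, F a ∈ p)
    (hli : LinearIndependent (ResidueField R) (fun a =>
      ((maximalIdeal R).toCotangent ⟨algebraMap _ R (F a),
        (IsLocalization.AtPrime.to_map_mem_maximal_iff R p _).mpr (hF a)⟩ :
        CotangentSpace R))) :
    ∃ ξ : Derivation k (MvPolynomial (Fin m) k) (MvPolynomial (Fin m) k),
      ξ (F a₀) ∉ p ∧ ∀ a ≠ a₀, ξ (F a) = 0 := by
  classical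
  obtain ⟨v, hv⟩ := exists_mulVec_eq_of_linearIndependent_residue
    (Matrix.of fun a i => algebraMap _ R (pderiv i (F a))) (linearIndependent_pderiv p R F hF hli)
    (Pi.single a₀ 1)
  obtain ⟨s, hs⟩ := IsLocalization.exist_integer_multiples_of_finite p.primeCompl v
  choose w hw using hs
  have hinj : Function.Injective (algebraMap (MvPolynomial (Fin m) k) R) :=
    IsLocalization.injective R p.primeCompl_le_nonZeroDivisors
  have key : ∀ a, (∑ i, w i • pderiv (R := k) i) (F a) = s * Pi.single (M := fun _ => _) a₀ 1 a := by
    intro a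
    apply hinj
    have hva := congrFun hv a
    simp only [Matrix.mulVec, dotProduct, Matrix.of_apply] at hva
    have h1 : algebraMap _ R (Pi.single (M := fun _ => MvPolynomial (Fin m) k) a₀ 1 a) =
        Pi.single (M := fun _ => R) a₀ 1 a := by
      by_cases h : a = a₀
      · subst h; simp
      · simp [h]
    rw [map_mul, h1, ← hva, Finset.mul_sum]
    rw [← Derivation.coeFnAddMonoidHom_apply, map_sum, Finset.sum_apply, map_sum]
    refine Finset.sum_congr rfl fun i _ => ?_
    simp only [Derivation.coeFnAddMonoidHom_apply, Derivation.smul_apply, smul_eq_mul, map_mul, hw,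
      Algebra.smul_def]
    ring
  refine ⟨∑ i, w i • pderiv i, ?_, fun a ha => ?_⟩
  · rw [key, Pi.single_eq_same, mul_one]; exact s.2
  · rw [key]; simp [ha]

theorem IsLocalRing.mem_sq_sup_span_of_toCotangent_mem_span {R ι : Type*} [CommRing R]
    [IsLocalRing R] (Y : ι → maximalIdeal R) (x : maximalIdeal R)
    (hx : ((maximalIdeal R).toCotangent x : CotangentSpace R) ∈
      Submodule.span (ResidueField R) (Set.range fun i => (maximalIdeal R).toCotangent (Y i))) :
    (x : R) ∈ maximalIdeal R ^ 2 ⊔ span (Set.range fun i => (Y i : R)) := by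
  have key : ∃ z : maximalIdeal R, (z : R) ∈ span (Set.range fun i => (Y i : R)) ∧
      (maximalIdeal R).toCotangent z = (maximalIdeal R).toCotangent x := by
    generalize (maximalIdeal R).toCotangent x = y at hx ⊢
    induction hx using Submodule.span_induction with
    | mem _ h =>
      obtain ⟨i, rfl⟩ := h
      exact ⟨Y i, subset_span ⟨i, rfl⟩, rfl⟩
    | zero => exact ⟨0, zero_mem _, map_zero _⟩
    | add _ _ _ _ h₁ h₂ =>
      obtain ⟨z₁, hz₁, rfl⟩ := h₁
      obtain ⟨z₂, hz₂, rfl⟩ := h₂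
      exact ⟨z₁ + z₂, add_mem hz₁ hz₂, map_add _ _ _⟩
    | smul c _ _ h =>
      obtain ⟨z, hz, rfl⟩ := h
      obtain ⟨r, rfl⟩ := residue_surjective c
      exact ⟨r • z, Ideal.mul_mem_left _ r hz, (map_smul _ _ _).trans
        (algebraMap_smul (ResidueField R) r _).symm⟩
  obtain ⟨z, hz, hzx⟩ := key
  rw [← sub_add_cancel (x : R) z]
  exact Submodule.add_mem_sup ((maximalIdeal R).toCotangent_eq.mp hzx.symm) hz

theorem ker_localRingHom_quotientMk_le {O : Type*} [CommRing O] (h p : Ideal O) [p.IsPrime]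
    (q : Ideal (O ⧸ h)) [q.IsPrime] (hpq : p = q.comap (Ideal.Quotient.mk h)) :
    RingHom.ker (Localization.localRingHom p q (Ideal.Quotient.mk h) hpq) ≤
      h.map (algebraMap O (Localization.AtPrime p)) := by
  intro x hx
  obtain ⟨a, s, rfl⟩ := IsLocalization.exists_mk'_eq p.primeCompl x
  rw [RingHom.mem_ker, Localization.localRingHom_mk', IsLocalization.mk'_eq_zero_iff] at hx
  obtain ⟨⟨t, ht⟩, hta⟩ := hx
  obtain ⟨t, rfl⟩ := Ideal.Quotient.mk_surjective t
  rw [← map_mul, Ideal.Quotient.eq_zero_iff_mem] at hta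
  have htp : t ∈ p.primeCompl := fun h => ht (by rw [hpq] at h; exact h)
  rw [IsLocalization.mk'_mem_map_algebraMap_iff]
  exact ⟨t, htp, hta⟩

/-- If `C` is regular, then any elements of the kernel of `R → C` which generate it modulo the
square of the maximal ideal generate the kernel. -/
theorem ker_le_of_isRegularLocal {R C : Type*} [CommRing R] [IsLocalRing R] [IsNoetherianRing R]
    [CommRing C] (hC : IsRegularLocal C) (φ : R →+* C) (hφ : Function.Surjective φ) (I : Ideal R)
    (hI : I ≤ RingHom.ker φ) (hker : RingHom.ker φ ≤ maximalIdeal R ^ 2 ⊔ I) :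
    RingHom.ker φ ≤ I := by
  classical
  obtain ⟨-, hloc, s, hmax, hcard⟩ := hC
  let t : Finset R := s.image (Function.surjInv hφ)
  have ht : (span (t : Set R)).map φ = span (s : Set C) := by
    rw [Ideal.map_span, Finset.coe_image, Set.image_image]
    simp [Function.surjInv_eq hφ]
  have hspan : span (t : Set R) ⊔ RingHom.ker φ = maximalIdeal R := by
    have := Ideal.comap_map_of_surjective φ hφ (span (t : Set R))
    rw [← RingHom.ker_eq_comap_bot] at this
    rw [← this, ht]
    have := Ideal.comap_isMaximal_of_surjective φ hφ (K := span (s : Set C))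
    exact eq_maximalIdeal this
  have hIt : I ⊔ span (t : Set R) = maximalIdeal R := by
    refine le_antisymm (sup_le (hI.trans (hspan ▸ le_sup_right)) (hspan ▸ le_sup_left)) ?_
    refine Submodule.le_of_le_smul_of_le_jacobson_bot (I := maximalIdeal R)
      (IsNoetherian.noetherian _) (maximalIdeal_le_jacobson _) ?_
    rw [smul_eq_mul, ← pow_two]
    conv_lhs => rw [← hspan]
    refine sup_le (le_sup_right.trans le_sup_left) (hker.trans (sup_le le_sup_right ?_))
    exact le_sup_left.trans le_sup_left
  refine le_of_card_le_ringKrullDim_quotient s.card t I _ hI hIt Finset.card_image_le ?_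
  rw [hcard, ringKrullDim_eq_of_ringEquiv (RingHom.quotientKerEquivOfSurjective hφ)]

theorem exists_notMem_forall_mul_mem_of_map_le {O : Type*} [CommRing O] [IsNoetherianRing O]
    (p : Ideal O) [p.IsPrime] {h I : Ideal O}
    (hle : h.map (algebraMap O (Localization.AtPrime p)) ≤
      I.map (algebraMap O (Localization.AtPrime p))) :
    ∃ s ∉ p, ∀ x ∈ h, s * x ∈ I := by
  classical
  obtain ⟨S, rfl⟩ := IsNoetherian.noetherian h
  have hS : ∀ x ∈ S, ∃ s ∉ p, s * x ∈ I := fun x hx => by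
    have hxI := hle (Ideal.mem_map_of_mem _ (subset_span hx))
    rw [IsLocalization.algebraMap_mem_map_algebraMap_iff p.primeCompl] at hxI
    exact hxI
  choose! s hs hsI using hS
  refine ⟨∏ x ∈ S, s x, fun hmem => ?_, fun x hx => ?_⟩
  · obtain ⟨x, hx, hxp⟩ := (Ideal.IsPrime.prod_mem_iff (p := p)).mp hmem
    exact hs x hx hxp
  · induction hx using Submodule.span_induction with
    | mem x hx =>
      rw [← Finset.prod_erase_mul S s hx, mul_assoc]
      exact I.mul_mem_left _ (hsI x hx)
    | zero => simp
    | add x y _ _ hx hy => rw [mul_add]; exact add_mem hx hy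
    | smul c x _ hx => rw [smul_eq_mul, mul_left_comm]; exact I.mul_mem_left _ hx

theorem map_le_map_of_regularAtImage {O : Type*} [CommRing O] [IsNoetherianRing O]
    {h I p : Ideal O} [hp : p.IsPrime] (hle : h ≤ p) (hreg : regularAtImage h p) (hI : I ≤ h)
    (hsq : h.map (algebraMap O (Localization.AtPrime p)) ≤
      maximalIdeal (Localization.AtPrime p) ^ 2 ⊔ I.map (algebraMap O (Localization.AtPrime p))) :
    h.map (algebraMap O (Localization.AtPrime p)) ≤
      I.map (algebraMap O (Localization.AtPrime p)) := by
  have hP : (p.map (Ideal.Quotient.mk h)).IsPrime :=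
    Ideal.map_isPrime_of_surjective Ideal.Quotient.mk_surjective (by rwa [Ideal.mk_ker])
  have hpq : p = (p.map (Ideal.Quotient.mk h)).comap (Ideal.Quotient.mk h) :=
    (Ideal.comap_map_mk hle).symm
  have : IsNoetherianRing (Localization.AtPrime p) :=
    IsLocalization.isNoetherianRing p.primeCompl _ inferInstance
  have hφ : Function.Surjective
      (Localization.localRingHom p (p.map (Ideal.Quotient.mk h)) (Ideal.Quotient.mk h) hpq) := by
    intro x
    obtain ⟨b, t, rfl⟩ := IsLocalization.exists_mk'_eq (p.map (Ideal.Quotient.mk h)).primeCompl x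
    obtain ⟨b, rfl⟩ := Ideal.Quotient.mk_surjective b
    obtain ⟨t, ht⟩ := t
    obtain ⟨t, rfl⟩ := Ideal.Quotient.mk_surjective t
    have htp : t ∈ p.primeCompl := fun h => ht (Ideal.mem_map_of_mem _ h)
    exact ⟨IsLocalization.mk' _ b ⟨t, htp⟩, Localization.localRingHom_mk' _ _ _ _ _ _⟩
  have hker : h.map (algebraMap O (Localization.AtPrime p)) ≤ RingHom.ker
      (Localization.localRingHom p (p.map (Ideal.Quotient.mk h)) (Ideal.Quotient.mk h) hpq) := by
    rw [Ideal.map_le_iff_le_comap]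
    intro x hx
    rw [Ideal.mem_comap, RingHom.mem_ker, Localization.localRingHom_to_map,
      Ideal.Quotient.eq_zero_iff_mem.mpr hx, map_zero]
  exact hker.trans (ker_le_of_isRegularLocal (hreg hP) _ hφ _ ((Ideal.map_mono hI).trans hker)
    ((ker_localRingHom_quotientMk_le h p _ hpq).trans hsq))

/-- An element of `p` outside `𝔪² + h` in the localization at `p` is moved out of `p` by some
derivation preserving `h`, provided `h` is regular at `p`. -/
theorem exists_preservesIdeal_notMem {k : Type*} [Field k] [CharZero k] {m : ℕ}
    (h p : Ideal (MvPolynomial (Fin m) k)) [hp : p.IsPrime] (hle : h ≤ p)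
    (hreg : regularAtImage h p) {f : MvPolynomial (Fin m) k} (hf : f ∈ p)
    (hf' : algebraMap _ (Localization.AtPrime p) f ∉
      maximalIdeal (Localization.AtPrime p) ^ 2 ⊔ h.map (algebraMap _ (Localization.AtPrime p))) :
    ∃ ξ : Derivation k (MvPolynomial (Fin m) k) (MvPolynomial (Fin m) k),
      PreservesIdeal h ξ ∧ ξ f ∉ p := by
  let R := Localization.AtPrime p
  have hpm : ∀ x ∈ p, algebraMap _ R x ∈ maximalIdeal R := fun x hx =>
    (IsLocalization.AtPrime.to_map_mem_maximal_iff R p x).mpr hx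
  have : IsNoetherianRing R := IsLocalization.isNoetherianRing p.primeCompl R inferInstance
  let V : h → maximalIdeal R := fun x =>
    ⟨algebraMap _ R (x : MvPolynomial (Fin m) k), hpm x (hle x.2)⟩
  obtain ⟨ι, a, -, hspan, hli⟩ := exists_linearIndependent' (ResidueField R)
    (fun x => ((maximalIdeal R).toCotangent (V x) : CotangentSpace R))
  have hfin : Finite ι := hli.finite
  have := Fintype.ofFinite ι
  have hrange : span (Set.range fun x => (V x : R)) = h.map (algebraMap _ R) := by
    rw [Ideal.map, Set.image_eq_range]
    rfl
  let F : Option ι → MvPolynomial (Fin m) k := fun o => o.elim f fun i => a i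
  have hF : ∀ o, F o ∈ p := fun o => o.rec hf fun i => hle (a i).2
  have hliF : LinearIndependent (ResidueField R) fun o =>
      ((maximalIdeal R).toCotangent ⟨algebraMap _ R (F o), hpm _ (hF o)⟩ : CotangentSpace R) := by
    refine linearIndependent_option.mpr ⟨hli, fun hmem => hf' ?_⟩
    rw [← hrange]
    refine mem_sq_sup_span_of_toCotangent_mem_span V ⟨algebraMap _ R f, hpm f hf⟩ ?_
    rw [← hspan]
    exact hmem
  obtain ⟨ξ, hξf, hξ⟩ := MvPolynomial.exists_derivation_notMem p R none F hF hliF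
  let I : Ideal (MvPolynomial (Fin m) k) := span (Set.range fun i => (a i : MvPolynomial (Fin m) k))
  have hIh : I ≤ h := span_le.mpr (by rintro _ ⟨i, rfl⟩; exact (a i).2)
  have hker : h.map (algebraMap _ R) ≤ I.map (algebraMap _ R) := by
    refine map_le_map_of_regularAtImage hle hreg hIh ?_
    rw [Ideal.map_le_iff_le_comap]
    intro x hx
    rw [Ideal.map_span, ← Set.range_comp]
    refine mem_sq_sup_span_of_toCotangent_mem_span (V ∘ a) (V ⟨x, hx⟩) ?_
    have := Submodule.subset_span (R := ResidueField R) (Set.mem_range_self (f := fun x =>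
      ((maximalIdeal R).toCotangent (V x) : CotangentSpace R)) ⟨x, hx⟩)
    rw [← hspan] at this
    exact this
  obtain ⟨s, hsp, hs⟩ := exists_notMem_forall_mul_mem_of_map_le p hker
  have hξI : ∀ x ∈ I, ξ x ∈ I := fun x hx => by
    induction hx using Submodule.span_induction with
    | mem x hx =>
      obtain ⟨i, rfl⟩ := hx
      rw [show ξ (a i) = 0 from hξ (some i) (by simp)]
      exact zero_mem _
    | zero => simp
    | add x y _ _ hx hy => rw [map_add]; exact add_mem hx hy
    | smul c x hx' hx =>
      rw [smul_eq_mul, Derivation.leibniz]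
      exact add_mem (I.mul_mem_left _ hx) (I.mul_mem_right _ hx')
  refine ⟨s • ξ, fun x hx => ?_, fun hmem => (hp.mem_or_mem hmem).elim hsp hξf⟩
  have h1 := hIh (hξI _ (hs x hx))
  rw [Derivation.leibniz] at h1
  exact (Ideal.add_mem_iff_left _ (h.mul_mem_right _ hx)).mp h1

theorem exists_notMem_mul_mem_of_mem_primitiveIdeal {k : Type*} [Field k] [CharZero k] {m : ℕ}
    {h g p : Ideal (MvPolynomial (Fin m) k)} (hle : h ≤ g) (hrad : g.IsRadical)
    (hp : p ∈ g.minimalPrimes) (hreg : regularAtImage h p) {f : MvPolynomial (Fin m) k}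
    (hf : f ∈ primitiveIdeal k h g) :
    ∃ s ∉ p, s * f ∈ g ^ 2 ⊔ h := by
  have hpp : p.IsPrime := hp.isPrime
  have hgp : g ≤ p := hp.le
  have hg : g.map (algebraMap _ (Localization.AtPrime p)) =
      maximalIdeal (Localization.AtPrime p) := by
    rw [← IsLocalization.AtPrime.map_eq_maximalIdeal p,
      ← IsLocalization.AtPrime.radical_map_of_mem_minimalPrimes _ p g hp,
      ← IsLocalization.map_radical p.primeCompl, hrad.radical]
  have hmem : algebraMap _ (Localization.AtPrime p) f ∈
      (g ^ 2 ⊔ h).map (algebraMap _ (Localization.AtPrime p)) := by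
    rw [Ideal.map_sup, Ideal.map_pow, hg]
    by_contra hf'
    obtain ⟨ξ, hξ, hξf⟩ := exists_preservesIdeal_notMem h p (hle.trans hgp) hreg (hgp hf.1) hf'
    exact hξf (hgp (hf.2 ξ hξ))
  rwa [IsLocalization.algebraMap_mem_map_algebraMap_iff p.primeCompl] at hmem

theorem mk_mem_nonZeroDivisors_of_forall_notMem_minimalPrimes {O : Type*} [CommRing O]
    {g : Ideal O} (hrad : g.IsRadical) {β : O} (hβ : ∀ p ∈ g.minimalPrimes, β ∉ p) :
    Ideal.Quotient.mk g β ∈ nonZeroDivisors (O ⧸ g) := by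
  rw [mem_nonZeroDivisors_iff_right]
  intro x hx
  obtain ⟨x, rfl⟩ := Ideal.Quotient.mk_surjective x
  rw [← map_mul, Ideal.Quotient.eq_zero_iff_mem] at hx
  rw [Ideal.Quotient.eq_zero_iff_mem, ← hrad.radical, ← Ideal.sInf_minimalPrimes, Ideal.mem_sInf]
  intro p hp
  exact (hp.isPrime.mem_or_mem (hp.le hx)).resolve_right (hβ p hp)

theorem torsionSet_subset_primitiveIdeal {k O : Type*} [CommRing k] [CommRing O] [Algebra k O]
    {h g : Ideal O} (hle : h ≤ g) : torsionSet h g ⊆ (primitiveIdeal k h g : Set O) := by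
  rintro f ⟨hf, β, hβ, hβf⟩
  refine ⟨hf, fun ξ hξ => ?_⟩
  have hmem : ∀ x ∈ g ^ 2 ⊔ h, ξ x ∈ g := fun x hx => by
    obtain ⟨y, hy, z, hz, rfl⟩ := Submodule.mem_sup.mp hx
    rw [map_add]
    refine add_mem ?_ (hle (hξ z hz))
    rw [pow_two] at hy
    refine Submodule.mul_induction_on hy (fun a ha b hb => ?_) fun a b ha hb => ?_
    · rw [Derivation.leibniz]
      exact add_mem (g.mul_mem_right _ ha) (g.mul_mem_right _ hb)
    · rw [map_add]
      exact add_mem ha hb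
  have h1 := hmem _ hβf
  rw [Derivation.leibniz] at h1
  have h2 : β * ξ f ∈ g := (Ideal.add_mem_iff_left _ (g.mul_mem_right _ hf)).mp h1
  rw [← Ideal.Quotient.eq_zero_iff_mem, map_mul] at h2
  exact Ideal.Quotient.eq_zero_iff_mem.mp ((mem_nonZeroDivisors_iff.mp hβ).1 _ h2)

/-- The torsion of the conormal module `M = g/(g² + h)` is `(∫_h g)/(g² + h)`: an element
of `g` is torsion in `M` iff it belongs to the primitive ideal `∫_h g`. -/
theorem statement4 {k : Type*} [Field k] [CharZero k] {m : ℕ}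
    (h g : Ideal (MvPolynomial (Fin m) k)) (hle : h ≤ g)
    (hh : IsUnmixed h) (hg : IsUnmixed g) (hrad : g.IsRadical)
    (hreg : ∀ p ∈ g.minimalPrimes, regularAtImage h p) :
    torsionSet h g = (primitiveIdeal k h g : Set (MvPolynomial (Fin m) k)) := by
  refine Set.Subset.antisymm (torsionSet_subset_primitiveIdeal hle) fun f hf => ⟨hf.1, ?_⟩
  have hnot : ¬ ((Submodule.comap (LinearMap.mulRight _ f) (g ^ 2 ⊔ h) : Ideal (MvPolynomial (Fin m) k)) :
      Set (MvPolynomial (Fin m) k)) ⊆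
      ⋃ p ∈ g.minimalPrimes, (p : Set (MvPolynomial (Fin m) k)) := by
    intro hsub
    obtain ⟨p, hp, hsub⟩ := (Ideal.subset_union_prime_finite (f := id)
      g.finite_minimalPrimes_of_isNoetherianRing ⊥ ⊥ fun p hp _ _ => hp.isPrime).mp hsub
    obtain ⟨s, hs, hsf⟩ :=
      exists_notMem_mul_mem_of_mem_primitiveIdeal hle hrad hp (hreg p hp) hf
    exact hs (hsub hsf)
  obtain ⟨β, hβ, hβp⟩ := Set.not_subset.mp hnot
  refine ⟨β, mk_mem_nonZeroDivisors_of_forall_notMem_minimalPrimes hrad fun p hp hβ' => ?_, hβ⟩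
  exact hβp (Set.mem_biUnion hp hβ')
end

section
/- Let 𝒪 be a polynomial ring over a field k of characteristic zero and let 𝔥 ⊆ 𝔤 be unmixed ideals of 𝒪 with 𝔤 radical, such that the localization of 𝒪/𝔥 at (the image of) every minimal prime of 𝔤 is a regular local ring. Write ḡ = 𝔤/𝔥 ⊆ 𝒪/𝔥. Then the torsion T(M) of the conormal module M = 𝔤/(𝔤² + 𝔥) is isomorphic as 𝒪/𝔤-module to ḡ⁽²⁾/ḡ², where ḡ⁽²⁾ is the second symbolic power of ḡ. -/
open Ideal

/-- Membership in the second symbolic power of the ideal `J`: `x ∈ J⁽²⁾` iff the image of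
`x` lies in `J² R_p` for every minimal prime `p` of `J`. -/
def memSymbolicSq {R : Type*} [CommRing R] (J : Ideal R) (x : R) : Prop :=
  ∀ p ∈ J.minimalPrimes, ∀ hP : p.IsPrime,
    algebraMap R (locAt p hP) x ∈ (J ^ 2).map (algebraMap R (locAt p hP))

/-- For a radical ideal `g`, the class of `β` is a non-zero-divisor modulo `g` iff `β` avoids
every minimal prime of `g`. -/
lemma mk_mem_nonZeroDivisors_iff_forall_minimalPrimes {O : Type*} [CommRing O] {g : Ideal O}
    (hrad : g.IsRadical) (β : O) :
    Ideal.Quotient.mk g β ∈ nonZeroDivisors (O ⧸ g) ↔ ∀ p ∈ g.minimalPrimes, β ∉ p := by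
  rw [mem_nonZeroDivisors_iff_right]
  constructor
  · intro hβ p hp hβp
    obtain ⟨y, hy, hxy⟩ := Ideal.exists_mul_mem_of_mem_minimalPrimes hp hβp
    refine hy (Ideal.Quotient.eq_zero_iff_mem.mp (hβ _ ?_))
    rw [← map_mul, Ideal.Quotient.eq_zero_iff_mem, mul_comm]
    exact hxy
  · intro hβ z hz
    obtain ⟨x, rfl⟩ := Ideal.Quotient.mk_surjective z
    rw [← map_mul, Ideal.Quotient.eq_zero_iff_mem] at hz
    rw [Ideal.Quotient.eq_zero_iff_mem, ← hrad.radical, ← Ideal.sInf_minimalPrimes,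
      Ideal.mem_sInf]
    intro p hp
    exact (hp.isPrime.mem_or_mem (hp.le hz)).resolve_right (hβ p hp)

/-- The kernel of the projection of the square of an ideal to a quotient ring. -/
lemma mk_mem_map_sq_iff {O : Type*} [CommRing O] (h g : Ideal O) (f : O) :
    Ideal.Quotient.mk h f ∈ (g.map (Ideal.Quotient.mk h)) ^ 2 ↔ f ∈ g ^ 2 ⊔ h := by
  rw [← Ideal.map_pow, Ideal.mem_quotient_iff_mem_sup]

/-- Membership of `f` in the second symbolic power of `g/h`, tested by multipliers outside each
minimal prime of `g`. -/
lemma memSymbolicSq_mk_iff {O : Type*} [CommRing O] {h g : Ideal O} (hle : h ≤ g) (f : O) :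
    memSymbolicSq (g.map (Ideal.Quotient.mk h)) (Ideal.Quotient.mk h f) ↔
      ∀ p ∈ g.minimalPrimes, ∃ β ∉ p, β * f ∈ g ^ 2 ⊔ h := by
  have hmin := Ideal.comap_minimalPrimes_eq_of_surjective
    (Ideal.Quotient.mk_surjective (I := h)) (g.map (Ideal.Quotient.mk h))
  rw [Ideal.comap_map_mk hle] at hmin
  rw [hmin, Set.forall_mem_image]
  refine forall₂_congr fun p hp => ?_
  have hP := hp.isPrime
  rw [forall_prop_of_true hP, IsLocalization.algebraMap_mem_map_algebraMap_iff p.primeCompl,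
    Ideal.Quotient.mk_surjective.exists]
  simp_rw [← map_mul, mk_mem_map_sq_iff]
  rfl

/-- If for each minimal prime of `g` some element of the ideal `I` avoids it, then some element
of `I` avoids all minimal primes of `g`. -/
lemma exists_mem_forall_notMem_minimalPrimes {O : Type*} [CommRing O] [IsNoetherianRing O]
    (g I : Ideal O) (hI : ∀ p ∈ g.minimalPrimes, ∃ β ∉ p, β ∈ I) :
    ∃ β ∈ I, ∀ p ∈ g.minimalPrimes, β ∉ p := by
  have hfin := g.finite_minimalPrimes_of_isNoetherianRing
  have hnot : ¬(I : Set O) ⊆ ⋃ p ∈ (hfin.toFinset : Set (Ideal O)), (p : Set O) := by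
    refine (Ideal.subset_union_prime (f := id) ⊥ ⊥ ?_).not.mpr ?_
    · rintro p hp - -
      exact (hfin.mem_toFinset.mp hp).isPrime
    · rintro ⟨p, hp, hle⟩
      obtain ⟨β, hβ, hβI⟩ := hI p (hfin.mem_toFinset.mp hp)
      exact hβ (hle hβI)
  simpa [Set.not_subset] using hnot

/-- The torsion of the conormal module corresponds to the second symbolic power. -/
lemma torsionSet_eq_memSymbolicSq {O : Type*} [CommRing O] [IsNoetherianRing O] {h g : Ideal O}
    (hle : h ≤ g) (hrad : g.IsRadical) :
    torsionSet h g =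
      {f | f ∈ g ∧ memSymbolicSq (g.map (Ideal.Quotient.mk h)) (Ideal.Quotient.mk h f)} := by
  ext f
  refine and_congr_right fun _ => ?_
  simp_rw [memSymbolicSq_mk_iff hle, mk_mem_nonZeroDivisors_iff_forall_minimalPrimes hrad]
  constructor
  · rintro ⟨β, hβ, hβf⟩ p hp
    exact ⟨β, hβ p hp, hβf⟩
  · intro H
    obtain ⟨β, hβf, hβ⟩ := exists_mem_forall_notMem_minimalPrimes g
      (Submodule.comap (LinearMap.mulRight O f) (g ^ 2 ⊔ h)) H
    exact ⟨β, hβ, hβf⟩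

/-- The torsion of the conormal module `M = g/(g² + h)` is isomorphic to `ḡ⁽²⁾/ḡ²` via the
canonical projection: an element `f ∈ g` is torsion in `M` iff its image in `O/h` lies in
the second symbolic power of `ḡ = g/h`, and the kernel of the induced map corresponds to
`ḡ²`. -/
theorem statement5 {k : Type*} [Field k] [CharZero k] {m : ℕ}
    (h g : Ideal (MvPolynomial (Fin m) k)) (hle : h ≤ g)
    (hh : IsUnmixed h) (hg : IsUnmixed g) (hrad : g.IsRadical)
    (hreg : ∀ p ∈ g.minimalPrimes, regularAtImage h p) :
    torsionSet h g =
      {f | f ∈ g ∧ memSymbolicSq (g.map (Ideal.Quotient.mk h)) (Ideal.Quotient.mk h f)} ∧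
    ∀ f : MvPolynomial (Fin m) k,
      Ideal.Quotient.mk h f ∈ (g.map (Ideal.Quotient.mk h)) ^ 2 ↔ f ∈ g ^ 2 ⊔ h :=
  ⟨torsionSet_eq_memSymbolicSq hle hrad, mk_mem_map_sq_iff h g⟩
end

section
/- Let 𝔤 be a radical ideal of a commutative noetherian ring 𝒪 generated by an 𝒪-regular sequence g₁,…,g_n. For an integer 1 ≤ t ≤ n set 𝔤* = (g₁,…,g_t) + (g_{t+1},…,g_n)². Then the set of associated primes of 𝒪/𝔤* equals the set of associated primes of 𝒪/𝔤. -/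
open Ideal

open RingTheory.Sequence in
/-- The coefficients of a linear relation between the members of a weakly regular sequence lie in
the ideal generated by the sequence. -/
theorem mem_span_range_of_sum_mul_eq_zero {R : Type*} [CommRing R] {n : ℕ} (f : Fin n → R)
    (hf : IsWeaklyRegular R (List.ofFn f)) (a : Fin n → R) (ha : ∑ i, a i * f i = 0) (i : Fin n) :
    a i ∈ Ideal.span (Set.range f) := by
  induction n with
  | zero => exact i.elim0
  | succ n ih =>
    rw [List.ofFn_succ', List.concat_eq_append, isWeaklyRegular_append_iff,
      isWeaklyRegular_singleton_iff] at hf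
    obtain ⟨hinit, hlast⟩ := hf
    have hspan : Ideal.ofList (List.ofFn fun i : Fin n => f i.castSucc) • (⊤ : Ideal R) =
        Ideal.span (Set.range fun i : Fin n => f i.castSucc) := by
      rw [smul_eq_mul, Ideal.mul_top, Ideal.ofList]
      congr 1
      ext x
      simp [List.mem_ofFn]
    have hle : Ideal.span (Set.range fun i : Fin n => f i.castSucc) ≤
        Ideal.span (Set.range f) :=
      Ideal.span_mono (Set.range_comp_subset_range Fin.castSucc f)
    rw [Fin.sum_univ_castSucc] at ha
    have hmem : a (Fin.last n) ∈ Ideal.span (Set.range fun i : Fin n => f i.castSucc) := by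
      rw [← hspan]
      refine mem_of_isSMulRegular_quotient_of_smul_mem hlast ?_
      rw [hspan, smul_eq_mul, mul_comm, eq_neg_of_add_eq_zero_right ha]
      exact neg_mem (sum_mem fun j _ =>
        Ideal.mul_mem_left _ _ (Ideal.subset_span (Set.mem_range_self j)))
    refine Fin.lastCases (hle hmem) (fun j => ?_) i
    obtain ⟨c, hc⟩ := Ideal.mem_span_range_iff_exists_fun.mp hmem
    have hj := ih (fun i => f i.castSucc) hinit
      (fun i => a i.castSucc + c i * f (Fin.last n)) (by
        rw [← ha, ← hc, Finset.sum_mul, ← Finset.sum_add_distrib]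
        exact Finset.sum_congr rfl fun _ _ => by ring) j
    exact (Ideal.add_mem_iff_left _
      (Ideal.mul_mem_left _ _ (Ideal.subset_span (Set.mem_range_self _)))).mp (hle hj)

/-- Membership in `(fᵢ : i ∉ S) + (fᵢ : i ∈ S)²`, read off from the coefficients, when `f` is a
weakly regular sequence. -/
theorem sum_mul_mem_span_sup_span_sq_iff {R : Type*} [CommRing R] {n : ℕ} (f : Fin n → R)
    (hf : RingTheory.Sequence.IsWeaklyRegular R (List.ofFn f)) (S : Set (Fin n))
    (a : Fin n → R) :
    ∑ i, a i * f i ∈ Ideal.span (f '' Sᶜ) ⊔ Ideal.span (f '' S) ^ 2 ↔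
      ∀ i ∈ S, a i ∈ Ideal.span (Set.range f) := by
  have hS : Ideal.span (f '' S) ≤ Ideal.span (Set.range f) :=
    Ideal.span_mono (Set.image_subset_range f S)
  constructor
  · intro h
    have hle : Ideal.span (f '' Sᶜ) ⊔ Ideal.span (f '' S) ^ 2 ≤
        (Submodule.pi S fun _ => Ideal.span (Set.range f)).map
          (Fintype.linearCombination R f) := by
      refine sup_le (Ideal.span_le.mpr ?_) ?_
      · rintro _ ⟨j, hj, rfl⟩
        refine ⟨Pi.single j 1, fun i hi => ?_, by simp⟩
        have hij : i ≠ j := fun h => hj (h ▸ hi)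
        simp [hij]
      · rw [sq]
        refine Ideal.mul_le.mpr fun r hr s hs => ?_
        obtain ⟨c, hc⟩ := Ideal.mem_span_range_iff_exists_fun.mp (hS hs)
        refine ⟨fun i => r * c i, fun i _ => Ideal.mul_mem_right _ _ (hS hr), ?_⟩
        simp [Fintype.linearCombination_apply, ← hc, Finset.mul_sum, mul_assoc]
    obtain ⟨b, hb, hab⟩ := hle h
    intro i hi
    have hrel := mem_span_range_of_sum_mul_eq_zero f hf (fun i => a i - b i) (by
      rw [Fintype.linearCombination_apply] at hab
      simp only [smul_eq_mul] at hab
      simp [sub_mul, Finset.sum_sub_distrib, hab]) i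
    exact (Submodule.sub_mem_iff_left _ (hb i hi)).mp hrel
  · intro h
    refine sum_mem fun i _ => ?_
    by_cases hi : i ∈ S
    · have hfi : f i ∈ Ideal.span (f '' S) := Ideal.subset_span (Set.mem_image_of_mem f hi)
      have hai := h i hi
      rw [← Set.image_univ, ← Set.compl_union_self S, Set.image_union, Ideal.span_union] at hai
      obtain ⟨x, hx, y, hy, hxy⟩ := Submodule.mem_sup.mp hai
      rw [← hxy, add_mul, sq]
      exact Submodule.add_mem_sup (Ideal.mul_mem_right _ _ hx) (Ideal.mul_mem_mul hy hfi)
    · exact Ideal.mul_mem_left _ _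
        (Ideal.mem_sup_left (Ideal.subset_span (Set.mem_image_of_mem f hi)))

/-- Over a noetherian ring, the associated primes of `R ⧸ I` are the primes of the form
`(I : x)`. -/
theorem mem_associatedPrimes_quotient_iff {R : Type*} [CommRing R] [IsNoetherianRing R]
    {I P : Ideal R} :
    P ∈ associatedPrimes R (R ⧸ I) ↔ P.IsPrime ∧ ∃ x, ∀ s, s ∈ P ↔ s * x ∈ I := by
  rw [AssociatedPrimes.mem_iff, isAssociatedPrime_iff, Ideal.Quotient.mk_surjective.exists]
  refine and_congr_right fun _ => exists_congr fun x => SetLike.ext_iff.trans ?_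
  refine forall_congr' fun s => ?_
  rw [Submodule.mem_colon_singleton, Submodule.mem_bot, ← Ideal.Quotient.eq_zero_iff_mem (I := I)]
  rfl

/-- If `f` is a weakly regular sequence and `S` is a nonempty set of indices, then
`(fᵢ : i ∉ S) + (fᵢ : i ∈ S)²` has the same associated primes as the ideal generated by `f`. -/
theorem associatedPrimes_quotient_span_sup_span_sq {R : Type*} [CommRing R] [IsNoetherianRing R]
    {n : ℕ} (f : Fin n → R) (hf : RingTheory.Sequence.IsWeaklyRegular R (List.ofFn f))
    {S : Set (Fin n)} (hS : S.Nonempty) :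
    associatedPrimes R (R ⧸ (Ideal.span (f '' Sᶜ) ⊔ Ideal.span (f '' S) ^ 2)) =
      associatedPrimes R (R ⧸ Ideal.span (Set.range f)) := by
  classical
  have hmem := sum_mul_mem_span_sup_span_sq_iff f hf S
  have hle : Ideal.span (f '' Sᶜ) ⊔ Ideal.span (f '' S) ^ 2 ≤ Ideal.span (Set.range f) :=
    sup_le (Ideal.span_mono (Set.image_subset_range _ _))
      ((Ideal.pow_le_self two_ne_zero).trans (Ideal.span_mono (Set.image_subset_range _ _)))
  ext P
  rw [mem_associatedPrimes_quotient_iff, mem_associatedPrimes_quotient_iff]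
  refine and_congr_right fun hP => ⟨?_, ?_⟩
  · rintro ⟨x, hx⟩
    by_cases hcap : ∀ r, r * x ∈ Ideal.span (Set.range f) → r ∈ P
    · exact ⟨x, fun s => ⟨fun hs => hle ((hx s).mp hs), hcap s⟩⟩
    push Not at hcap
    obtain ⟨r, hrx, hr⟩ := hcap
    obtain ⟨a, ha⟩ := Ideal.mem_span_range_iff_exists_fun.mp hrx
    have hPa : ∀ s, s ∈ P ↔ ∀ i ∈ S, s * a i ∈ Ideal.span (Set.range f) := by
      intro s
      rw [← hmem fun i => s * a i]
      simp only [mul_assoc]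
      rw [← Finset.mul_sum, ha, ← mul_assoc, ← hx]
      exact ⟨fun h => P.mul_mem_right _ h, fun h => (hP.mem_or_mem h).resolve_right hr⟩
    have hinf : S.toFinset.inf (fun i => (Ideal.span (Set.range f)).colon {a i}) = P := by
      ext s
      simp [Submodule.mem_finsetInf, Submodule.mem_colon_singleton, hPa]
    obtain ⟨i, -, hi⟩ := Ideal.eq_inf_of_isPrime_inf (hinf ▸ hP)
    refine ⟨a i, fun s => ?_⟩
    rw [← hinf, ← hi, Submodule.mem_colon_singleton, smul_eq_mul]
  · rintro ⟨x, hx⟩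
    obtain ⟨j, hj⟩ := hS
    refine ⟨x * f j, fun s => ?_⟩
    have h := hmem (Pi.single j (s * x))
    rw [Finset.sum_eq_single j (fun i _ hi => by simp [hi]) (by simp), Pi.single_eq_same,
      mul_assoc] at h
    rw [h, hx]
    refine ⟨fun hs i _ => ?_, fun h => by simpa using h j hj⟩
    obtain rfl | hij := eq_or_ne i j
    · simpa using hs
    · simp [hij]

/-- If a radical ideal `g` is generated by a regular sequence `g₁, …, gₙ` and
`g* = (g₁, …, g_t) + (g_{t+1}, …, gₙ)²`, then `Ass(O/g*) = Ass(O/g)`. -/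
theorem statement6 {O : Type*} [CommRing O] [IsNoetherianRing O]
    {n : ℕ} (gs : Fin n → O)
    (hregseq : RingTheory.Sequence.IsRegular O (List.ofFn gs))
    (g : Ideal O) (hgen : g = Ideal.span (Set.range gs)) (hrad : g.IsRadical)
    (t : ℕ) (ht1 : 1 ≤ t) (htn : t ≤ n) :
    associatedPrimes O
        (O ⧸ (Ideal.span (Set.range fun j : Fin t => gs (Fin.castLE htn j)) ⊔
          (Ideal.span (gs '' {i : Fin n | t ≤ (i : ℕ)})) ^ 2)) =
      associatedPrimes O (O ⧸ g) := by
  subst hgen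
  have hlow : (Set.range fun j : Fin t => gs (Fin.castLE htn j)) =
      gs '' {i : Fin n | t ≤ (i : ℕ)}ᶜ := by
    ext x
    constructor
    · rintro ⟨j, rfl⟩
      exact ⟨Fin.castLE htn j, by simp, rfl⟩
    · rintro ⟨i, hi, rfl⟩
      exact ⟨⟨i, by simpa using hi⟩, rfl⟩
  rw [hlow]
  obtain hS | hS := {i : Fin n | t ≤ (i : ℕ)}.eq_empty_or_nonempty
  · rw [hS, Set.compl_empty, Set.image_univ, Set.image_empty, Ideal.span_empty,
      Ideal.bot_pow two_ne_zero, sup_bot_eq]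
  · exact associatedPrimes_quotient_span_sup_span_sq gs hregseq.toIsWeaklyRegular hS
end

section
/- Under the hypotheses of the preceding statement (𝒪 polynomial ring over a field of characteristic zero; 𝔥 ⊆ 𝔤 with 𝔥 unmixed, 𝔤 radical and generated by an 𝒪-regular sequence g₁,…,g_n; localizations of 𝒪/𝔥 at all minimal primes of 𝔤 regular; images of g₁,…,g_t lie in T(M); for every associated prime 𝔭 of 𝒪/𝔤 the images of g_{t+1},…,g_n generate (𝔤/𝔥)_𝔭̄ as a complete intersection), the quotient N = M/T(M) is a free 𝒪/𝔤-module with basis the images of g_{t+1},…,g_n, and M ≅ T(M) ⊕ N as 𝒪/𝔤-modules. -/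
open Ideal

/-- The `(t+1)`-st through `n`-th members `g_{t+1}, …, g_n` of a family `g_1, …, g_n`. -/
def tailFam {O : Type*} {n : ℕ} (gs : Fin n → O) (t : ℕ) (j : Fin (n - t)) : O :=
  gs ⟨t + (j : ℕ), by have := j.isLt; omega⟩

/-- The images of `g_{t+1}, …, g_n` in the localization of `O/h` at the image of the
prime `p` form a regular sequence and generate the localization of `g/h` there, i.e. they
generate it as a complete intersection ideal. -/
def generatesAsCI {O : Type*} [CommRing O] (h g : Ideal O) {n : ℕ}
    (gs : Fin n → O) (t : ℕ) (p : Ideal O) : Prop :=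
  ∀ hP : (p.map (Ideal.Quotient.mk h)).IsPrime,
    RingTheory.Sequence.IsRegular (locAt (p.map (Ideal.Quotient.mk h)) hP)
      (List.ofFn fun j : Fin (n - t) =>
        algebraMap (O ⧸ h) (locAt (p.map (Ideal.Quotient.mk h)) hP)
          (Ideal.Quotient.mk h (tailFam gs t j))) ∧
    Ideal.span (Set.range fun j : Fin (n - t) =>
        algebraMap (O ⧸ h) (locAt (p.map (Ideal.Quotient.mk h)) hP)
          (Ideal.Quotient.mk h (tailFam gs t j))) =
      (g.map (Ideal.Quotient.mk h)).map
        (algebraMap (O ⧸ h) (locAt (p.map (Ideal.Quotient.mk h)) hP))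

/-- The relations among the members of a weakly regular sequence have all their coefficients in
the ideal generated by the sequence. -/
theorem mem_span_range_of_sum_mul_eq_zero_s8 {A : Type*} [CommRing A] :
    ∀ {r : ℕ} (x : Fin r → A),
      RingTheory.Sequence.IsWeaklyRegular A (List.ofFn x) →
      ∀ a : Fin r → A, ∑ j, a j * x j = 0 → ∀ j, a j ∈ Ideal.span (Set.range x) := by
  intro r
  induction r with
  | zero => exact fun _ _ _ _ j => j.elim0
  | succ r ih =>
    intro x hx a ha
    have hofList : Ideal.ofList (List.ofFn fun i : Fin r => x i.castSucc) =
        Ideal.span (Set.range fun i : Fin r => x i.castSucc) := by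
      rw [Ideal.ofList]
      congr 1
      ext y
      exact List.mem_ofFn
    have hle : Ideal.span (Set.range fun i : Fin r => x i.castSucc) ≤
        Ideal.span (Set.range x) :=
      Ideal.span_mono (Set.range_comp_subset_range Fin.castSucc x)
    rw [List.ofFn_succ_last, RingTheory.Sequence.isWeaklyRegular_append_iff,
      RingTheory.Sequence.isWeaklyRegular_singleton_iff, hofList] at hx
    rw [Fin.sum_univ_castSucc] at ha
    have hlast : a (Fin.last r) ∈ Ideal.span (Set.range fun i : Fin r => x i.castSucc) := by
      have := mem_of_isSMulRegular_quotient_of_smul_mem hx.2 (x := a (Fin.last r)) (by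
        rw [smul_eq_mul, smul_eq_mul, Ideal.mul_top, mul_comm, eq_neg_of_add_eq_zero_right ha]
        exact neg_mem (Ideal.sum_mem _ fun i _ =>
          Ideal.mul_mem_left _ _ (Ideal.subset_span ⟨i, rfl⟩)))
      rwa [smul_eq_mul, Ideal.mul_top] at this
    obtain ⟨d, hd⟩ := Ideal.mem_span_range_iff_exists_fun.mp hlast
    have hinit := ih (fun i => x i.castSucc) hx.1
      (fun i => a i.castSucc + d i * x (Fin.last r)) (by
        rw [← ha, ← hd, Finset.sum_mul, ← Finset.sum_add_distrib]
        exact Finset.sum_congr rfl fun i _ => by ring)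
    refine Fin.lastCases (hle hlast) fun i => ?_
    exact (Ideal.add_mem_iff_left _
      (Ideal.mul_mem_left _ (d i) (Ideal.subset_span (Set.mem_range_self _)))).mp (hle (hinit i))

/-- A weakly regular sequence is independent modulo the square of the ideal it generates. -/
theorem mem_span_range_of_sum_mul_mem_sq {A : Type*} [CommRing A] {r : ℕ} (x : Fin r → A)
    (hx : RingTheory.Sequence.IsWeaklyRegular A (List.ofFn x)) (a : Fin r → A)
    (ha : ∑ j, a j * x j ∈ Ideal.span (Set.range x) ^ 2) (j : Fin r) :
    a j ∈ Ideal.span (Set.range x) := by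
  rw [pow_two, ← smul_eq_mul] at ha
  obtain ⟨b, hb, hsum⟩ := (Submodule.mem_ideal_smul_span_iff_exists_sum _ _ _).mp ha
  rw [Finsupp.sum_fintype _ _ (by simp)] at hsum
  have := mem_span_range_of_sum_mul_eq_zero_s8 x hx (fun j => a j - b j) (by
    simp only [smul_eq_mul] at hsum
    simp only [sub_mul, Finset.sum_sub_distrib, hsum, sub_self]) j
  exact (sub_add_cancel (a j) (b j)) ▸ add_mem this (hb j)

/-- If `g_{t+1}, …, g_n` generate `g/h` locally at `p` as a complete intersection, then the
coefficients of a combination of them lying in `g² + h` belong to `g` locally at `p`. -/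
theorem generatesAsCI.exists_notMem_mul_mem {O : Type*} [CommRing O] {h g p : Ideal O}
    [p.IsPrime] (hhg : h ≤ g) (hgp : g ≤ p) {n : ℕ} {gs : Fin n → O} {t : ℕ}
    (hci : generatesAsCI h g gs t p) (c : Fin (n - t) → O)
    (hc : ∑ j, c j * tailFam gs t j ∈ g ^ 2 ⊔ h) (j : Fin (n - t)) :
    ∃ s ∉ p, s * c j ∈ g := by
  have hP : (p.map (Ideal.Quotient.mk h)).IsPrime :=
    Ideal.map_isPrime_of_surjective Ideal.Quotient.mk_surjective (by simpa using hhg.trans hgp)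
  obtain ⟨hreg, hspan⟩ := hci hP
  set φ := algebraMap (O ⧸ h) (locAt (p.map (Ideal.Quotient.mk h)) hP)
  have hsum : ∑ j, φ (Ideal.Quotient.mk h (c j)) * φ (Ideal.Quotient.mk h (tailFam gs t j)) ∈
      ((g.map (Ideal.Quotient.mk h)).map φ) ^ 2 := by
    have := Ideal.mem_map_of_mem φ (Ideal.mem_map_of_mem (Ideal.Quotient.mk h) hc)
    rw [Ideal.map_sup, Ideal.map_quotient_self, sup_bot_eq, Ideal.map_pow, Ideal.map_pow] at this
    simpa only [map_sum, map_mul] using this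
  have hmem := mem_span_range_of_sum_mul_mem_sq _ hreg.toIsWeaklyRegular
    (fun j => φ (Ideal.Quotient.mk h (c j))) (by rwa [hspan]) j
  rw [hspan, IsLocalization.algebraMap_mem_map_algebraMap_iff
    (p.map (Ideal.Quotient.mk h)).primeCompl] at hmem
  obtain ⟨s', hs', hmem⟩ := hmem
  obtain ⟨s, rfl⟩ := Ideal.Quotient.mk_surjective s'
  refine ⟨s, fun hs => hs' (Ideal.mem_map_of_mem _ hs), ?_⟩
  rw [← map_mul, Ideal.mem_quotient_iff_mem hhg] at hmem
  exact hmem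

/-- Membership in an ideal of a noetherian ring can be checked locally at the associated primes
of the quotient. -/
theorem mem_of_forall_associatedPrimes {O : Type*} [CommRing O] [IsNoetherianRing O]
    {g : Ideal O} {f : O}
    (hf : ∀ p ∈ associatedPrimes O (O ⧸ g), ∃ s ∉ p, s * f ∈ g) : f ∈ g := by
  by_contra hfg
  obtain ⟨p, hp, hle⟩ := exists_le_isAssociatedPrime_of_isNoetherianRing O
    (Ideal.Quotient.mk g f) (by rwa [Ne, Ideal.Quotient.eq_zero_iff_mem])
  obtain ⟨s, hs, hsf⟩ := hf p hp
  refine hs (hle ?_)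
  rw [Submodule.mem_colon_singleton, Submodule.mem_bot, Algebra.smul_def,
    Ideal.Quotient.algebraMap_eq, ← map_mul, Ideal.Quotient.eq_zero_iff_mem]
  exact hsf

/-- Torsion representatives are closed under linear combinations. -/
theorem sum_mul_mem_torsionSet {O ι : Type*} [CommRing O] {h g : Ideal O} (s : Finset ι)
    (a x : ι → O) (hx : ∀ i ∈ s, x i ∈ torsionSet h g) :
    ∑ i ∈ s, a i * x i ∈ torsionSet h g := by
  classical
  induction s using Finset.induction_on with
  | empty => exact ⟨by simp, 1, by simp, by simp⟩
  | insert i s hi ih =>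
    obtain ⟨hsg, β, hβ, hβs⟩ := ih fun j hj => hx j (Finset.mem_insert_of_mem hj)
    obtain ⟨hig, γ, hγ, hγi⟩ := hx i (Finset.mem_insert_self i s)
    rw [Finset.sum_insert hi]
    refine ⟨add_mem (Ideal.mul_mem_left _ _ hig) hsg, γ * β, by
      rw [map_mul]; exact mul_mem hγ hβ, ?_⟩
    have : γ * β * (a i * x i + ∑ j ∈ s, a j * x j) =
        β * a i * (γ * x i) + γ * (β * ∑ j ∈ s, a j * x j) := by ring
    rw [this]
    exact add_mem (Ideal.mul_mem_left _ _ hγi) (Ideal.mul_mem_left _ _ hβs)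

/-- A sum over `Fin n` splits into the first `t` terms and the remaining ones. -/
theorem sum_eq_sum_lt_add_sum_tailFam {O : Type*} [CommRing O] {n t : ℕ} (htn : t ≤ n)
    (a x : Fin n → O) :
    ∑ i, a i * x i = ∑ i with i.val < t, a i * x i +
      ∑ j, tailFam a t j * tailFam x t j := by
  rw [← Finset.sum_filter_add_sum_filter_not Finset.univ (fun i : Fin n => i.val < t)]
  congr 1
  symm
  refine Finset.sum_bij (fun j _ => ⟨t + j.val, by omega⟩) ?_ ?_ ?_ ?_
  · intro j _; simp
  · intro j _ j' _ hjj; ext; simpa using hjj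
  · intro i hi
    have : t ≤ i.val := by simpa using hi
    exact ⟨⟨i.val - t, by omega⟩, Finset.mem_univ _, by ext; simp; omega⟩
  · intro j _; rfl

/-- Under the conditions of Proposition `basic`, `N = M/T(M)` is free over `O/g` with the
images of `g_{t+1}, …, gₙ` as a basis, and `M ≅ T(M) ⊕ N` (internally: every element of
`M` is a torsion element plus a combination of the basis, the basis is independent over
`O/g`, and a combination of the basis that is torsion is zero in `M`). -/
theorem statement8 {k : Type*} [Field k] [CharZero k] {m : ℕ}
    (h g : Ideal (MvPolynomial (Fin m) k)) (hle : h ≤ g)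
    (hh : IsUnmixed h) (hrad : g.IsRadical)
    {n : ℕ} (gs : Fin n → MvPolynomial (Fin m) k)
    (hregseq : RingTheory.Sequence.IsRegular (MvPolynomial (Fin m) k) (List.ofFn gs))
    (hgen : g = Ideal.span (Set.range gs))
    (hreg : ∀ p ∈ g.minimalPrimes, regularAtImage h p)
    (t : ℕ) (htn : t ≤ n)
    (h1 : ∀ i : Fin n, (i : ℕ) < t → gs i ∈ torsionSet h g)
    (h2 : ∀ p ∈ associatedPrimes (MvPolynomial (Fin m) k) (MvPolynomial (Fin m) k ⧸ g),
      generatesAsCI h g gs t p) :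
    (∀ f ∈ g, ∃ c : Fin (n - t) → MvPolynomial (Fin m) k,
        f - ∑ j, c j * tailFam gs t j ∈ torsionSet h g) ∧
    (∀ c : Fin (n - t) → MvPolynomial (Fin m) k,
        (∑ j, c j * tailFam gs t j) ∈ torsionSet h g → ∀ j, c j ∈ g) ∧
    (∀ c : Fin (n - t) → MvPolynomial (Fin m) k,
        (∑ j, c j * tailFam gs t j) ∈ torsionSet h g →
          (∑ j, c j * tailFam gs t j) ∈ g ^ 2 ⊔ h) := by
  have hindep : ∀ c : Fin (n - t) → MvPolynomial (Fin m) k,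
      (∑ j, c j * tailFam gs t j) ∈ torsionSet h g → ∀ j, c j ∈ g := by
    rintro c ⟨-, β, hβ, hβc⟩ j
    have hβj : β * c j ∈ g := mem_of_forall_associatedPrimes fun p hp => by
      have : p.IsPrime := hp.isPrime
      have hgp : g ≤ p := by
        simpa only [Ideal.annihilator_quotient, Submodule.annihilator_top] using hp.annihilator_le
      refine (h2 p hp).exists_notMem_mul_mem hle hgp (fun j => β * c j) ?_ j
      simpa only [Finset.mul_sum, mul_assoc] using hβc
    rw [← Ideal.Quotient.eq_zero_iff_mem, map_mul] at hβj
    exact Ideal.Quotient.eq_zero_iff_mem.mp ((mul_left_mem_nonZeroDivisors_eq_zero_iff hβ).mp hβj)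
  have htail : ∀ j, tailFam gs t j ∈ g := fun j => hgen ▸ Ideal.subset_span ⟨_, rfl⟩
  refine ⟨fun f hf => ?_, hindep, fun c hc => ?_⟩
  · rw [hgen] at hf
    obtain ⟨a, rfl⟩ := Ideal.mem_span_range_iff_exists_fun.mp hf
    refine ⟨tailFam a t, ?_⟩
    rw [sum_eq_sum_lt_add_sum_tailFam htn, add_sub_cancel_right]
    exact sum_mul_mem_torsionSet _ _ _ fun i hi => h1 i (by simpa using hi)
  · refine Ideal.mem_sup_left (Ideal.sum_mem _ fun j _ => ?_)
    rw [pow_two]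
    exact Ideal.mul_mem_mul (hindep c hc j) (htail j)
end

section
/- Let 𝒪 be a commutative noetherian ring, 𝔥 ⊆ 𝔤 ideals with 𝔤 a radical ideal generated by an 𝒪-regular sequence g₁,…,g_n and 𝔥 minimally generated by h₁,…,h_p. Suppose there are an integer 0 ≤ t ≤ n and elements β₁,…,β_t of 𝒪 whose images in 𝒪/𝔤 are non-zerodivisors such that β_i g_i ∈ 𝔤² + 𝔥 for i = 1,…,t. Write β_i g_i ≡ Σ_{k=1}^p a_{ik} h_k mod 𝔤² and h_k = Σ_{j=1}^n b_{kj} g_j, and let C₁ = (Σ_k a_{ik} b_{kj})_{1≤i,j≤t}. Then the determinant of the image of C₁ in 𝒪/𝔤 equals β̄₁⋯β̄_t, a non-zerodivisor of 𝒪/𝔤; consequently the p×t matrix B₁ = (b_{kj})_{1≤k≤p, 1≤j≤t} has rank at least t over 𝒪/𝔤, and t ≤ p. -/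
open Ideal

/-- The coefficients of a linear relation among the terms of a weakly regular sequence lie in the
ideal which the sequence generates. -/
theorem RingTheory.Sequence.IsWeaklyRegular.coeff_mem_span_of_sum_eq_zero {R : Type*} [CommRing R]
    {n : ℕ} {r : Fin n → R} (hr : RingTheory.Sequence.IsWeaklyRegular R (List.ofFn r))
    {c : Fin n → R} (hc : ∑ j, c j * r j = 0) (j : Fin n) :
    c j ∈ Ideal.span (Set.range r) := by
  induction n with
  | zero => exact j.elim0
  | succ n ih =>
    rw [List.ofFn_succ', List.concat_eq_append,
      RingTheory.Sequence.isWeaklyRegular_append_iff,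
      RingTheory.Sequence.isWeaklyRegular_singleton_iff,
      isSMulRegular_quotient_iff_mem_of_smul_mem] at hr
    obtain ⟨hinit, hlast⟩ := hr
    have hlist : Ideal.ofList (List.ofFn fun i : Fin n => r i.castSucc) =
        Ideal.span (Set.range fun i : Fin n => r i.castSucc) := by
      simp [Ideal.ofList, List.mem_ofFn', Set.range]
    simp only [hlist, smul_eq_mul, Ideal.mul_top] at hlast
    have hle : Ideal.span (Set.range fun i : Fin n => r i.castSucc) ≤
        Ideal.span (Set.range r) :=
      Ideal.span_mono (Set.range_comp_subset_range Fin.castSucc r)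
    rw [Fin.sum_univ_castSucc] at hc
    have hmem : c (Fin.last n) ∈ Ideal.span (Set.range fun i : Fin n => r i.castSucc) := by
      refine hlast _ ?_
      rw [show r (Fin.last n) * c (Fin.last n) = -∑ i : Fin n, c i.castSucc * r i.castSucc by
        linear_combination hc]
      exact neg_mem (sum_mem fun i _ =>
        Ideal.mul_mem_left _ _ (Ideal.subset_span (Set.mem_range_self i)))
    obtain ⟨d, hd⟩ := Ideal.mem_span_range_iff_exists_fun.mp hmem
    have hrel : ∑ i : Fin n, (c i.castSucc + d i * r (Fin.last n)) * r i.castSucc = 0 := by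
      rw [← hc, ← hd, Finset.sum_mul, ← Finset.sum_add_distrib]
      exact Finset.sum_congr rfl fun i _ => by ring
    refine Fin.lastCases (hle hmem) (fun i => ?_) j
    have hi := hle (ih hinit hrel i)
    exact (Ideal.add_mem_iff_left _ (Ideal.mul_mem_left _ _
      (Ideal.subset_span (Set.mem_range_self (Fin.last n))))).mp hi

/-- The terms of a weakly regular sequence generating `I` are linearly independent in `I / I ^ 2`
over `R / I`. -/
theorem RingTheory.Sequence.IsWeaklyRegular.coeff_mem_span_of_sum_mem_sq {R : Type*} [CommRing R]
    {n : ℕ} {r : Fin n → R} (hr : RingTheory.Sequence.IsWeaklyRegular R (List.ofFn r))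
    {c : Fin n → R} (hc : ∑ j, c j * r j ∈ Ideal.span (Set.range r) ^ 2) (j : Fin n) :
    c j ∈ Ideal.span (Set.range r) := by
  rw [pow_two, ← smul_eq_mul, Ideal.span, Submodule.mem_ideal_smul_span_iff_exists_sum] at hc
  obtain ⟨d, hd, hsum⟩ := hc
  rw [Finsupp.sum_fintype _ _ (by simp)] at hsum
  have hrel : ∑ i, (c i - d i) * r i = 0 := by
    simp only [sub_mul, Finset.sum_sub_distrib, ← hsum, smul_eq_mul, sub_self]
  exact (Submodule.sub_mem_iff_left _ (hd j)).mp (hr.coeff_mem_span_of_sum_eq_zero hrel j)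

/-- A matrix with a left multiple whose determinant is a non-zero-divisor has full column rank. -/
theorem Matrix.rank_eq_card_of_det_mul_mem_nonZeroDivisors {R m n : Type*} [CommRing R]
    [Nontrivial R] [Fintype m] [Fintype n] [DecidableEq n] (A : Matrix n m R) (B : Matrix m n R)
    (hdet : (A * B).det ∈ nonZeroDivisors R) : B.rank = Fintype.card n := by
  have hinj : Function.Injective B.mulVecLin := by
    rw [← LinearMap.ker_eq_bot, LinearMap.ker_eq_bot']
    intro v hv
    have hdetv : (A * B).det • v = 0 := by
      rw [← Matrix.one_mulVec v, ← Matrix.smul_mulVec, ← Matrix.adjugate_mul,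
        ← Matrix.mulVec_mulVec, ← Matrix.mulVec_mulVec, ← Matrix.mulVecLin_apply B, hv,
        Matrix.mulVec_zero, Matrix.mulVec_zero]
    ext i
    exact (mul_left_mem_nonZeroDivisors_eq_zero_iff hdet).mp (congrFun hdetv i)
  rw [Matrix.rank, LinearMap.finrank_range_of_inj hinj, Module.finrank_fintype_fun_eq_card]

/-- The "implicit function theorem" lemma: if `β_i g_i ∈ g² + h` for non-zero-divisors
`β̄_i` of `O/g`, with `β_i g_i ≡ Σ_k a_{ik} h_k mod g²` and `h_k = Σ_j b_{kj} g_j`, then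
`det C̄₁ = β̄₁ ⋯ β̄_t` is a non-zero-divisor in `O/g`, the matrix `B₁` has rank at least
`t` over `O/g`, and `t ≤ p`. -/
theorem statement9 {O : Type*} [CommRing O] [IsNoetherianRing O]
    (h g : Ideal O) (hle : h ≤ g) (hrad : g.IsRadical)
    {n : ℕ} (gs : Fin n → O)
    (hregseq : RingTheory.Sequence.IsRegular O (List.ofFn gs))
    (hgen : g = Ideal.span (Set.range gs))
    {p : ℕ} (hs : Fin p → O) (hhgen : h = Ideal.span (Set.range hs))
    (hmin : ∀ i : Fin p, hs i ∉ Ideal.span (hs '' {j | j ≠ i}))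
    (t : ℕ) (htn : t ≤ n)
    (β : Fin t → O)
    (hβ : ∀ i, Ideal.Quotient.mk g (β i) ∈ nonZeroDivisors (O ⧸ g))
    (hβg : ∀ i : Fin t, β i * gs (Fin.castLE htn i) ∈ g ^ 2 ⊔ h)
    (a : Fin t → Fin p → O)
    (ha : ∀ i : Fin t, β i * gs (Fin.castLE htn i) - ∑ kk, a i kk * hs kk ∈ g ^ 2)
    (b : Fin p → Fin n → O)
    (hb : ∀ kk : Fin p, hs kk = ∑ j, b kk j * gs j) :
    Matrix.det (Matrix.of fun i j : Fin t =>
        Ideal.Quotient.mk g (∑ kk, a i kk * b kk (Fin.castLE htn j))) =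
      Ideal.Quotient.mk g (∏ i, β i) ∧
    Ideal.Quotient.mk g (∏ i, β i) ∈ nonZeroDivisors (O ⧸ g) ∧
    t ≤ Matrix.rank (Matrix.of fun (kk : Fin p) (j : Fin t) =>
        Ideal.Quotient.mk g (b kk (Fin.castLE htn j))) ∧
    t ≤ p := by
  have hC : (Matrix.of fun i j : Fin t =>
      Ideal.Quotient.mk g (∑ kk, a i kk * b kk (Fin.castLE htn j))) =
      Matrix.diagonal fun i => Ideal.Quotient.mk g (β i) := by
    ext i j
    have hsq : ∑ l, ((if l = Fin.castLE htn i then β i else 0) - ∑ kk, a i kk * b kk l) * gs l ∈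
        Ideal.span (Set.range gs) ^ 2 := by
      convert hgen ▸ ha i using 1
      simp only [sub_mul, Finset.sum_sub_distrib, ite_mul, zero_mul, Finset.sum_ite_eq',
        Finset.mem_univ, if_true, hb, Finset.mul_sum, Finset.sum_mul, mul_assoc]
      rw [Finset.sum_comm]
    have hmem := hregseq.coeff_mem_span_of_sum_mem_sq hsq (Fin.castLE htn j)
    rw [← hgen, ← Ideal.Quotient.mk_eq_mk_iff_sub_mem] at hmem
    rw [Matrix.of_apply, ← hmem, Matrix.diagonal_apply]
    simp only [Fin.castLE_inj, eq_comm (a := j)]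
    split_ifs <;> simp
  have hdet := congrArg Matrix.det hC
  rw [Matrix.det_diagonal, ← map_prod] at hdet
  have hprod : Ideal.Quotient.mk g (∏ i, β i) ∈ nonZeroDivisors (O ⧸ g) := by
    rw [map_prod]
    exact prod_mem fun i _ => hβ i
  have hg : g ≠ ⊤ := by
    rintro rfl
    apply hregseq.top_ne_smul
    rw [smul_eq_mul, Ideal.mul_top, hgen]
    simp [Ideal.ofList, List.mem_ofFn', Set.range]
  have : Nontrivial (O ⧸ g) := Ideal.Quotient.nontrivial_iff.mpr hg
  have hrank := Matrix.rank_eq_card_of_det_mul_mem_nonZeroDivisors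
    (Matrix.of fun i kk => Ideal.Quotient.mk g (a i kk))
    (Matrix.of fun (kk : Fin p) (j : Fin t) => Ideal.Quotient.mk g (b kk (Fin.castLE htn j)))
    (by
      rw [← hdet] at hprod
      convert hprod using 2
      ext i j
      simp [Matrix.mul_apply])
  rw [Fintype.card_fin] at hrank
  refine ⟨hdet, hprod, hrank.ge, ?_⟩
  rw [← hrank]
  exact Matrix.rank_le_height _
end

section
/- Let 𝒪 be a polynomial ring over a field k of characteristic zero and let 𝔥 ⊆ 𝔤 be complete intersection ideals of grades p and n respectively, with 𝔤 radical, generated by an 𝒪-regular sequence g₁,…,g_n, and such that the localization of 𝒪/𝔥 at (the image of) every minimal prime of 𝔤 is a regular local ring. Suppose h₁,…,h_p are generators of 𝔥 with h_i ≡ Σ_{j=1}^t b_{ij} g_j mod 𝔤² for i = 1,…,p, for some 0 ≤ t ≤ n, where b_{ij} ∉ 𝔤 ∖ {0} and for each j the column (b_{1j},…,b_{pj}) is nonzero in (𝒪/𝔤)^p. Then t ≥ p. -/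
open Ideal

open IsLocalRing in
/-- Let `rs` be a regular sequence in a noetherian local ring `A` such that `A / (rs)` is regular.
Then a finite subset of the maximal ideal `m` whose span contains `rs` modulo `m ^ 2` has at least
as many elements as `rs`. -/
lemma length_le_card_of_isRegularLocal {A B : Type*} [CommRing A] [IsLocalRing A]
    [IsNoetherianRing A] [CommRing B] (hB : IsRegularLocal B) (f : A →+* B)
    (hf : Function.Surjective f) (rs : List A) (hreg : RingTheory.Sequence.IsRegular A rs)
    (hker : RingHom.ker f = Ideal.ofList rs) (T : Finset A)
    (hT : (T : Set A) ⊆ maximalIdeal A)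
    (hrs : ∀ r ∈ rs, r ∈ Ideal.span (T : Set A) ⊔ maximalIdeal A ^ 2) :
    rs.length ≤ T.card := by
  classical
  obtain ⟨-, hlocal, s, hs, hcard⟩ := hB
  obtain ⟨u, hu, hus⟩ : ∃ u : Finset A, f '' u = s ∧ u.card = s.card := by
    refine ⟨s.image (Function.surjInv hf), ?_,
      Finset.card_image_of_injective _ (Function.injective_surjInv hf)⟩
    rw [Finset.coe_image, Set.image_image]
    simp [Function.surjInv_eq hf]
  have hcomap : (Ideal.span (s : Set B)).comap f = maximalIdeal A :=
    eq_maximalIdeal (Ideal.comap_isMaximal_of_surjective f hf)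
  have hmax : maximalIdeal A = Ideal.span (u : Set A) ⊔ Ideal.ofList rs := by
    rw [← hcomap, ← hu, ← Ideal.map_span, Ideal.comap_map_of_surjective f hf, ← hker]
    rfl
  have hgen : maximalIdeal A ≤ Ideal.span (↑(u ∪ T) : Set A) := by
    refine Submodule.le_of_le_smul_of_le_jacobson_bot (I := maximalIdeal A)
      (IsNoetherian.noetherian _) (maximalIdeal_le_jacobson _) ?_
    rw [smul_eq_mul, ← pow_two, Finset.coe_union, Ideal.span_union, sup_assoc]
    conv_lhs => rw [hmax]
    exact sup_le_sup_left (Ideal.span_le.2 hrs) _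
  have hle : Ideal.span (↑(u ∪ T) : Set A) = maximalIdeal A := by
    refine le_antisymm (Ideal.span_le.2 ?_) hgen
    rw [Finset.coe_union]
    refine Set.union_subset (fun x hx => ?_) hT
    rw [hmax]
    exact Ideal.mem_sup_left (Ideal.subset_span hx)
  have hheight : ringKrullDim A ≤ (u.card + T.card : ℕ) := by
    rw [← maximalIdeal_height_eq_ringKrullDim]
    have hmin : maximalIdeal A ∈ (Ideal.span (↑(u ∪ T) : Set A)).minimalPrimes := by
      rw [hle, Ideal.minimalPrimes_eq_subsingleton_self]
      rfl
    have := (Ideal.height_le_card_of_mem_minimalPrimes_span_finset hmin).trans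
      (Nat.cast_le.2 (Finset.card_union_le u T))
    exact_mod_cast this
  have hdim := ringKrullDim_add_length_eq_ringKrullDim_of_isRegular rs hreg
  rw [← ringKrullDim_eq_of_ringEquiv ((Ideal.quotEquivOfEq hker.symm).trans
    (RingHom.quotientKerEquivOfSurjective hf)).symm, ← hcard] at hdim
  rw [← hdim, hus] at hheight
  have : s.card + rs.length ≤ s.card + T.card := by exact_mod_cast hheight
  omega

/-- Lemma `representation` (1): in the presentation `h_i ≡ Σ_{j≤t} b_{ij} g_j mod g²` one
has `t ≥ p`. -/
theorem statement10 {k : Type*} [Field k] [CharZero k] {m : ℕ}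
    (h g : Ideal (MvPolynomial (Fin m) k)) (hle : h ≤ g) (hrad : g.IsRadical)
    {p n : ℕ} (hs : Fin p → MvPolynomial (Fin m) k) (gs : Fin n → MvPolynomial (Fin m) k)
    (hhseq : RingTheory.Sequence.IsRegular (MvPolynomial (Fin m) k) (List.ofFn hs))
    (hhgen : h = Ideal.span (Set.range hs))
    (hgseq : RingTheory.Sequence.IsRegular (MvPolynomial (Fin m) k) (List.ofFn gs))
    (hggen : g = Ideal.span (Set.range gs))
    (hreg : ∀ q ∈ g.minimalPrimes, regularAtImage h q)
    (t : ℕ) (htn : t ≤ n)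
    (b : Fin p → Fin t → MvPolynomial (Fin m) k)
    (hcong : ∀ i : Fin p, hs i - ∑ j, b i j * gs (Fin.castLE htn j) ∈ g ^ 2)
    (hb1 : ∀ i j, b i j ∈ g → b i j = 0)
    (hb2 : ∀ j : Fin t, ∃ i, b i j ∉ g) :
    p ≤ t := by
  classical
  have hgtop : g ≠ ⊤ := by
    intro htop
    apply hgseq.top_ne_smul
    have : Ideal.ofList (List.ofFn gs) = g := by
      rw [hggen, Ideal.ofList]
      congr 1
      ext x
      simp
    rw [this, htop]
    simp
  obtain ⟨q, hq⟩ := Ideal.nonempty_minimalPrimes hgtop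
  have hqp : q.IsPrime := hq.1.1
  have hgq : g ≤ q := hq.1.2
  have hhq : h ≤ q := hle.trans hgq
  have hsurj := Ideal.Quotient.mk_surjective (I := h)
  have hP : (q.map (Ideal.Quotient.mk h)).IsPrime :=
    Ideal.map_isPrime_of_surjective hsurj (by rwa [Ideal.mk_ker])
  have hcomap : (q.map (Ideal.Quotient.mk h)).comap (Ideal.Quotient.mk h) = q := by
    rw [Ideal.comap_map_of_surjective _ hsurj, ← RingHom.ker_eq_comap_bot, Ideal.mk_ker]
    exact sup_eq_left.2 hhq
  have hM : Submonoid.map (Ideal.Quotient.mk h) q.primeCompl =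
      (q.map (Ideal.Quotient.mk h)).primeCompl := by
    ext x
    obtain ⟨x, rfl⟩ := hsurj x
    constructor
    · rintro ⟨y, hy, hyx⟩ hx
      rw [← hyx] at hx
      exact hy (hcomap.le hx)
    · intro hx
      exact ⟨x, fun hxq => hx (Ideal.mem_map_of_mem _ hxq), rfl⟩
  let A := Localization.AtPrime q
  let B := locAt (q.map (Ideal.Quotient.mk h)) hP
  let φ : A →+* B := IsLocalization.map B (Ideal.Quotient.mk h)
    (hM ▸ Submonoid.le_comap_map q.primeCompl)
  have hφ : Function.Surjective φ := by
    have : IsLocalization (Submonoid.map (Ideal.Quotient.mk h) q.primeCompl) B := by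
      rw [hM]
      exact Localization.isLocalization
    exact IsLocalization.map_surjective_of_surjective _ _ _ hsurj
  have hker : RingHom.ker φ = Ideal.ofList ((List.ofFn hs).map (algebraMap _ A)) := by
    rw [IsLocalization.ker_map B (Ideal.Quotient.mk h) hM, Ideal.mk_ker, ← Ideal.map_ofList,
      hhgen, Ideal.ofList]
    congr 2
    ext x
    simp
  have hmem : ∀ x ∈ q, algebraMap _ A x ∈ IsLocalRing.maximalIdeal A := fun x hx =>
    (IsLocalization.AtPrime.to_map_mem_maximal_iff A q x).2 hx
  have hgsq : ∀ j, gs j ∈ g := fun j => hggen ▸ Ideal.subset_span ⟨j, rfl⟩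
  have hhsq : ∀ i, hs i ∈ q := fun i => hhq (hhgen ▸ Ideal.subset_span ⟨i, rfl⟩)
  have hregA : RingTheory.Sequence.IsRegular A ((List.ofFn hs).map (algebraMap _ A)) :=
    hhseq.1.isRegular_of_isLocalization_of_mem A q (by
      intro r hr
      obtain ⟨i, rfl⟩ := (List.mem_ofFn' _ _).1 hr
      exact hhsq i)
  have key := length_le_card_of_isRegularLocal (hreg q hq hP) φ hφ _ hregA hker
    (Finset.univ.image fun j : Fin t => algebraMap _ A (gs (Fin.castLE htn j)))
    (by
      intro x hx
      obtain ⟨j, -, rfl⟩ := Finset.mem_image.1 (Finset.mem_coe.1 hx)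
      exact hmem _ (hgq (hgsq _)))
    (by
      intro r hr
      obtain ⟨x, hx, rfl⟩ := List.mem_map.1 hr
      obtain ⟨i, rfl⟩ := (List.mem_ofFn' _ _).1 hx
      rw [← add_sub_cancel (∑ j, b i j * gs (Fin.castLE htn j)) (hs i), map_add, map_sum]
      refine Submodule.add_mem_sup (Ideal.sum_mem _ fun j _ => ?_) ?_
      · rw [map_mul]
        exact Ideal.mul_mem_left _ _ (Ideal.subset_span (by simp))
      · have := Ideal.mem_map_of_mem (algebraMap _ A) (hcong i)
        rw [Ideal.map_pow] at this
        have hmap : g.map (algebraMap _ A) ≤ IsLocalRing.maximalIdeal A :=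
          Ideal.map_le_iff_le_comap.2 fun x hx => hmem x (hgq hx)
        exact Ideal.pow_right_mono hmap 2 this)
  simpa using key.trans Finset.card_image_le
end

section
/- Let 𝒪 be a polynomial ring over a field k of characteristic zero, 𝔥 ⊆ 𝔤 complete intersection ideals of grades p and n, with 𝒪/𝔤 reduced and Spec(𝒪/𝔤) connected, and the localization of 𝒪/𝔥 at (the image of) every minimal prime of 𝔤 a regular local ring. Suppose 𝔤 is generated by an 𝒪-regular sequence g₁,…,g_n and 𝔥 by h₁,…,h_p with h_i ≡ Σ_{j=1}^p b_{ij} g_j mod 𝔤² (i = 1,…,p). Then b = det(b_{ij}) is a non-zerodivisor in 𝒪/𝔤; the images ĝ₁,…,ĝ_p of g₁,…,g_p generate the torsion T(M) of the conormal module M = 𝔤/(𝔤²+𝔥) over 𝒪/𝔤; the images ĝ_{p+1},…,ĝ_n of g_{p+1},…,g_n freely generate N = M/T(M) over 𝒪/𝔤; and M ≅ T(M) ⊕ N with rank(M) = rank(N) = n − p. -/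
open Ideal

open RingTheory.Sequence IsLocalRing

/-- The ideal of a list enumerating a finite family is the span of the range of the family. -/
lemma ofList_ofFn_eq_span_range {R : Type*} [CommRing R] {n : ℕ} (gs : Fin n → R) :
    Ideal.ofList (List.ofFn gs) = Ideal.span (Set.range gs) := by
  simp [Ideal.ofList, List.mem_ofFn, Set.range]

/-- The coefficients of a syzygy of a weakly regular sequence lie in the ideal it generates. -/
lemma coeff_mem_of_sum_mul_eq_zero {R : Type*} [CommRing R] {n : ℕ} {gs : Fin n → R}
    (hgs : IsWeaklyRegular R (List.ofFn gs)) {c : Fin n → R} (hc : ∑ j, c j * gs j = 0)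
    (j : Fin n) : c j ∈ Ideal.span (Set.range gs) := by
  induction n with
  | zero => exact j.elim0
  | succ n ih =>
    rw [List.ofFn_succ_last, isWeaklyRegular_append_iff, isWeaklyRegular_singleton_iff] at hgs
    obtain ⟨hinit, hlast⟩ := hgs
    have hmono : Ideal.span (Set.range fun i : Fin n => gs i.castSucc) ≤
        Ideal.span (Set.range gs) :=
      Ideal.span_mono (Set.range_subset_iff.2 fun i => ⟨_, rfl⟩)
    have hlastmem : c (Fin.last n) ∈ Ideal.span (Set.range fun i : Fin n => gs i.castSucc) := by
      rw [isSMulRegular_iff_right_eq_zero_of_smul] at hlast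
      have key := hlast (Submodule.Quotient.mk (c (Fin.last n)))
      rw [← Submodule.Quotient.mk_smul, Submodule.Quotient.mk_eq_zero,
        Submodule.Quotient.mk_eq_zero, ofList_ofFn_eq_span_range] at key
      simp only [smul_eq_mul, Ideal.mul_top] at key
      refine key ?_
      rw [Fin.sum_univ_castSucc] at hc
      rw [mul_comm, ← neg_eq_of_add_eq_zero_right hc]
      exact neg_mem (Ideal.sum_mem _ fun i _ =>
        Ideal.mul_mem_left _ _ (Ideal.subset_span ⟨i, rfl⟩))
    obtain ⟨d, hd⟩ := Ideal.mem_span_range_iff_exists_fun.1 hlastmem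
    refine Fin.lastCases (hmono hlastmem) (fun i => ?_) j
    have := ih hinit (c := fun i => c i.castSucc + d i * gs (Fin.last n)) (by
      rw [Fin.sum_univ_castSucc, ← hd, Finset.sum_mul] at hc
      rw [← hc, ← Finset.sum_add_distrib]
      exact Finset.sum_congr rfl fun i _ => by ring) i
    have h' := sub_mem (hmono this)
      (Ideal.mul_mem_left _ (d i) (Ideal.subset_span (Set.mem_range_self (Fin.last n))))
    simpa using h'

/-- A weakly regular sequence generating `I` gives a linearly independent family in `I / I²`
over `R / I`. -/
lemma coeff_mem_of_sum_mul_mem_sq {R : Type*} [CommRing R] {n : ℕ} {gs : Fin n → R}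
    (hgs : IsWeaklyRegular R (List.ofFn gs)) {c : Fin n → R}
    (hc : ∑ j, c j * gs j ∈ Ideal.span (Set.range gs) ^ 2)
    (j : Fin n) : c j ∈ Ideal.span (Set.range gs) := by
  rw [pow_two, ← smul_eq_mul] at hc
  obtain ⟨e, he, hsum⟩ := (Submodule.mem_ideal_smul_span_iff_exists_sum _ gs _).1 hc
  rw [Finsupp.sum_fintype _ _ (by simp)] at hsum
  have h := coeff_mem_of_sum_mul_eq_zero hgs (c := fun j => c j - e j) (by
    simp only [sub_mul, Finset.sum_sub_distrib]
    rw [← hsum]; simp) j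
  simpa using add_mem h (he j)

/-- If a regular sequence in a noetherian local ring `R` cuts out a regular quotient `S`, then
its members are linearly independent in the cotangent space of `R`. -/
lemma coeff_mem_maximalIdeal_of_regular_quotient {R S : Type*} [CommRing R] [IsNoetherianRing R]
    [IsLocalRing R] [CommRing S] {p : ℕ} {hs : Fin p → R} (hreg : IsRegular R (List.ofFn hs))
    (φ : R →+* S) (hφ : Function.Surjective φ)
    (hker : RingHom.ker φ = Ideal.span (Set.range hs)) (hS : IsRegularLocal S)
    {a : Fin p → R} (ha : ∑ i, a i * hs i ∈ maximalIdeal R ^ 2) (i : Fin p) :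
    a i ∈ maximalIdeal R := by
  classical
  by_contra hi
  have hu : IsUnit (a i) := by simpa using hi
  obtain ⟨-, _, s, hmax, hcard⟩ := hS
  have hdim : ringKrullDim S + p = ringKrullDim R := by
    have h := ringKrullDim_add_length_eq_ringKrullDim_of_isRegular _ hreg
    rw [List.length_ofFn, ofList_ofFn_eq_span_range, ← hker,
      ringKrullDim_eq_of_ringEquiv (RingHom.quotientKerEquivOfSurjective hφ)] at h
    exact h
  have hmem : ∀ j, hs j ∈ maximalIdeal R := fun j => by
    have : RingHom.ker φ ≤ maximalIdeal R := le_maximalIdeal (RingHom.ker_ne_top φ)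
    exact this (hker ▸ Ideal.subset_span ⟨j, rfl⟩)
  obtain ⟨l, hl⟩ := hφ.hasRightInverse
  set t : Finset R := (Finset.univ.erase i).image hs ∪ s.image l with ht
  have htcard : t.card + 1 ≤ p + s.card := by
    have h1 := Finset.card_union_le ((Finset.univ.erase i).image hs) (s.image l)
    have h2 := Finset.card_image_le (s := Finset.univ.erase i) (f := hs)
    have h3 := Finset.card_image_le (s := s) (f := l)
    rw [Finset.card_erase_of_mem (Finset.mem_univ i), Finset.card_univ, Fintype.card_fin] at h2
    have := i.pos
    rw [ht]
    omega
  have hcomap : (Ideal.span (s : Set S)).comap φ = maximalIdeal R :=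
    have := Ideal.comap_isMaximal_of_surjective φ hφ (K := Ideal.span (s : Set S))
    eq_maximalIdeal this
  have htle : Ideal.span (t : Set R) ≤ maximalIdeal R := by
    rw [Ideal.span_le]
    intro x hx
    simp only [ht, Finset.coe_union, Finset.coe_image, Set.mem_union, Set.mem_image] at hx
    obtain ⟨j, -, rfl⟩ | ⟨y, hy, rfl⟩ := hx
    · exact hmem j
    · rw [← hcomap, SetLike.mem_coe, Ideal.mem_comap, hl y]
      exact Ideal.subset_span hy
  have hhs : ∀ j, hs j ∈ Ideal.span (t : Set R) ⊔ maximalIdeal R ^ 2 := by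
    have herase : ∀ j ≠ i, hs j ∈ Ideal.span (t : Set R) ⊔ maximalIdeal R ^ 2 := fun j hj =>
      Ideal.mem_sup_left (Ideal.subset_span (by
        simp only [ht, Finset.coe_union, Finset.coe_image]
        exact Or.inl ⟨j, by simpa using hj, rfl⟩))
    intro j
    by_cases hj : j = i
    · subst hj
      rw [← Finset.add_sum_erase _ _ (Finset.mem_univ j)] at ha
      have h := sub_mem (Ideal.mem_sup_right (S := Ideal.span (t : Set R)) ha)
        (Ideal.sum_mem (t := Finset.univ.erase j) _ fun x hx =>
          Ideal.mul_mem_left _ (a x) (herase x (Finset.ne_of_mem_erase hx)))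
      rw [add_sub_cancel_right] at h
      exact (Ideal.unit_mul_mem_iff_mem _ hu).1 h
    · exact herase j hj
  have hle : maximalIdeal R ≤ Ideal.span (t : Set R) := by
    refine Submodule.le_of_le_smul_of_le_jacobson_bot (I := maximalIdeal R)
      (IsNoetherian.noetherian _) (maximalIdeal_le_jacobson _) ?_
    rw [smul_eq_mul, ← pow_two]
    intro x hx
    rw [← hcomap, Ideal.mem_comap] at hx
    have hmap : (Ideal.span (s.image l : Set R)).map φ = Ideal.span (s : Set S) := by
      rw [Ideal.map_span, Finset.coe_image, ← Set.image_comp]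
      congr 1
      ext y
      simp [hl _]
    rw [← hmap, Ideal.mem_map_iff_of_surjective φ hφ] at hx
    obtain ⟨y, hy, hxy⟩ := hx
    have hker' : x - y ∈ RingHom.ker φ := by simp [RingHom.mem_ker, hxy]
    have h1 : y ∈ Ideal.span (t : Set R) :=
      Ideal.span_mono (by simp [ht]) hy
    have h2 : RingHom.ker φ ≤ Ideal.span (t : Set R) ⊔ maximalIdeal R ^ 2 := by
      rw [hker, Ideal.span_le]
      rintro _ ⟨j, rfl⟩
      exact hhs j
    simpa using add_mem (h2 hker') (Ideal.mem_sup_left h1)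
  have hrank : (maximalIdeal R).spanFinrank ≤ t.card := by
    rw [le_antisymm hle htle]
    simpa using Submodule.spanFinrank_span_le_ncard_of_finite (R := R) t.finite_toSet
  have hdimle := ringKrullDim_le_spanFinrank_maximalIdeal R
  rw [← hdim, ← hcard] at hdimle
  have : s.card + p ≤ (maximalIdeal R).spanFinrank := by exact_mod_cast hdimle
  omega

/-- If `R / (h₁, …, h_p)` is regular at the prime `q`, then the `hᵢ` are linearly independent in
the cotangent space of `R` at `q`. -/
lemma coeff_mem_of_regularAtImage {R : Type*} [CommRing R] [IsNoetherianRing R] {p : ℕ}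
    {hs : Fin p → R} (hreg : IsWeaklyRegular R (List.ofFn hs)) {q : Ideal R} [q.IsPrime]
    (hq : Ideal.span (Set.range hs) ≤ q) (hS : regularAtImage (Ideal.span (Set.range hs)) q)
    {a : Fin p → R} (ha : ∑ i, a i * hs i ∈ q ^ 2) (i : Fin p) : a i ∈ q := by
  set h := Ideal.span (Set.range hs) with hh
  have hsurj : Function.Surjective (Ideal.Quotient.mk h) := Ideal.Quotient.mk_surjective
  have hP : (q.map (Ideal.Quotient.mk h)).IsPrime :=
    Ideal.map_isPrime_of_surjective hsurj (by rwa [Ideal.mk_ker])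
  have hcomap : (q.map (Ideal.Quotient.mk h)).comap (Ideal.Quotient.mk h) = q := by
    rw [Ideal.comap_map_of_surjective' _ hsurj, Ideal.mk_ker, sup_eq_left.2 hq]
  have hT : Submonoid.map (Ideal.Quotient.mk h) q.primeCompl =
      (q.map (Ideal.Quotient.mk h)).primeCompl := by
    have := Submonoid.map_comap_eq_of_surjective (f := (Ideal.Quotient.mk h : R →* R ⧸ h)) hsurj
      (q.map (Ideal.Quotient.mk h)).primeCompl
    rw [← this]
    congr 1
    ext x
    conv_lhs => rw [Ideal.mem_primeCompl_iff, ← hcomap]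
    rfl
  let φ : Localization.AtPrime q →+* Localization.AtPrime (q.map (Ideal.Quotient.mk h)) :=
    IsLocalization.map _ (Ideal.Quotient.mk h) (hT.symm ▸ Submonoid.le_comap_map _)
  have hker : RingHom.ker φ =
      Ideal.span (Set.range fun i => algebraMap R (Localization.AtPrime q) (hs i)) := by
    rw [IsLocalization.ker_map _ _ hT, Ideal.mk_ker, hh, Ideal.map_span, ← Set.range_comp]
    rfl
  have hφ : Function.Surjective φ := by
    intro y
    obtain ⟨b, ⟨s, hs'⟩, rfl⟩ :=
      IsLocalization.exists_mk'_eq (q.map (Ideal.Quotient.mk h)).primeCompl y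
    obtain ⟨b, rfl⟩ := hsurj b
    obtain ⟨s, hs, rfl⟩ := hT ▸ hs'
    exact ⟨IsLocalization.mk' _ b ⟨s, hs⟩, IsLocalization.map_mk' _ _ _⟩
  have hregloc : IsRegular (Localization.AtPrime q)
      (List.ofFn fun i => algebraMap R (Localization.AtPrime q) (hs i)) := by
    have := hreg.isRegular_of_isLocalization_of_mem (Localization.AtPrime q) q (fun r hr => by
      obtain ⟨j, rfl⟩ := List.mem_ofFn.1 hr
      exact hq (Ideal.subset_span ⟨j, rfl⟩))
    rwa [List.map_ofFn] at this
  have := coeff_mem_maximalIdeal_of_regular_quotient hregloc φ hφ hker (hS hP)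
    (a := fun i => algebraMap R (Localization.AtPrime q) (a i)) (by
      rw [← Localization.AtPrime.map_eq_maximalIdeal, ← Ideal.map_pow]
      simpa using Ideal.mem_map_of_mem (algebraMap R (Localization.AtPrime q)) ha) i
  rwa [IsLocalization.AtPrime.to_map_mem_maximal_iff (Localization.AtPrime q) q] at this

/-- A sum over `Fin n` splits into its first `p` and its last `n - p` terms. -/
lemma sum_eq_sum_castLE_add_sum_tail {A : Type*} [AddCommMonoid A] {p n : ℕ} (hpn : p ≤ n)
    (F : Fin n → A) : ∑ i, F i = ∑ j : Fin p, F (Fin.castLE hpn j) +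
      ∑ j : Fin (n - p), F ⟨p + j, by have := j.isLt; omega⟩ := by
  rw [← (finCongr (Nat.add_sub_cancel' hpn)).sum_comp F, Fin.sum_univ_add]
  rfl

/-- If `I` is radical and `x` lies in no minimal prime of `I`, then `x` is a nonzerodivisor
modulo `I`. -/
lemma mk_mem_nonZeroDivisors_of_notMem_minimalPrimes {R : Type*} [CommRing R] {I : Ideal R}
    [IsReduced (R ⧸ I)] {x : R} (hx : ∀ q ∈ I.minimalPrimes, x ∉ q) :
    Ideal.Quotient.mk I x ∈ nonZeroDivisors (R ⧸ I) := by
  have hrad : I.IsRadical := (Ideal.isRadical_iff_quotient_reduced I).2 inferInstance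
  rw [mem_nonZeroDivisors_iff_right]
  intro y hy
  obtain ⟨y, rfl⟩ := Ideal.Quotient.mk_surjective y
  rw [← map_mul, Ideal.Quotient.eq_zero_iff_mem] at hy
  rw [Ideal.Quotient.eq_zero_iff_mem, ← hrad.radical, ← Ideal.sInf_minimalPrimes, Ideal.mem_sInf]
  intro q hq
  have := hq.1.1
  exact (this.mem_or_mem (hq.1.2 hy)).resolve_right (hx q hq)

/-- Proposition `free1`, parts 1) and 2): `b = det(b_{ij})` is a non-zero-divisor in
`O/g`, the images of `g₁, …, g_p` generate `T(M)`, the images of `g_{p+1}, …, gₙ`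
freely generate `N = M/T(M)` over `O/g`, and `M ≅ T(M) ⊕ N`. -/
theorem statement12 {k : Type*} [Field k] [CharZero k] {m : ℕ}
    (h g : Ideal (MvPolynomial (Fin m) k)) (hle : h ≤ g)
    [IsReduced (MvPolynomial (Fin m) k ⧸ g)]
    [ConnectedSpace (PrimeSpectrum (MvPolynomial (Fin m) k ⧸ g))]
    {p n : ℕ} (hpn : p ≤ n)
    (hs : Fin p → MvPolynomial (Fin m) k) (gs : Fin n → MvPolynomial (Fin m) k)
    (hhseq : RingTheory.Sequence.IsRegular (MvPolynomial (Fin m) k) (List.ofFn hs))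
    (hhgen : h = Ideal.span (Set.range hs))
    (hgseq : RingTheory.Sequence.IsRegular (MvPolynomial (Fin m) k) (List.ofFn gs))
    (hggen : g = Ideal.span (Set.range gs))
    (hreg : ∀ q ∈ g.minimalPrimes, regularAtImage h q)
    (b : Fin p → Fin p → MvPolynomial (Fin m) k)
    (hcong : ∀ i : Fin p, hs i - ∑ j, b i j * gs (Fin.castLE hpn j) ∈ g ^ 2) :
    Ideal.Quotient.mk g (Matrix.det (Matrix.of b)) ∈
        nonZeroDivisors (MvPolynomial (Fin m) k ⧸ g) ∧
    (∀ j : Fin p, gs (Fin.castLE hpn j) ∈ torsionSet h g) ∧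
    (∀ f ∈ torsionSet h g, ∃ c : Fin p → MvPolynomial (Fin m) k,
        f - ∑ j, c j * gs (Fin.castLE hpn j) ∈ g ^ 2 ⊔ h) ∧
    (∀ f ∈ g, ∃ c : Fin (n - p) → MvPolynomial (Fin m) k,
        f - ∑ j, c j * tailFam gs p j ∈ torsionSet h g) ∧
    (∀ c : Fin (n - p) → MvPolynomial (Fin m) k,
        (∑ j, c j * tailFam gs p j) ∈ torsionSet h g → ∀ j, c j ∈ g) ∧
    (∀ c : Fin (n - p) → MvPolynomial (Fin m) k,
        (∑ j, c j * tailFam gs p j) ∈ torsionSet h g →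
          (∑ j, c j * tailFam gs p j) ∈ g ^ 2 ⊔ h) := by
  have hgmem : ∀ j, gs j ∈ g := fun j => hggen ▸ Ideal.subset_span ⟨j, rfl⟩
  have hdet : Ideal.Quotient.mk g (Matrix.det (Matrix.of b)) ∈
      nonZeroDivisors (MvPolynomial (Fin m) k ⧸ g) := by
    refine mk_mem_nonZeroDivisors_of_notMem_minimalPrimes fun q hq hmem => ?_
    have := hq.1.1
    have hgq : g ≤ q := hq.1.2
    have hdet0 : ((Matrix.of b).map (Ideal.Quotient.mk q)).det = 0 := by
      rw [← RingHom.mapMatrix_apply, ← RingHom.map_det]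
      exact Ideal.Quotient.eq_zero_iff_mem.2 hmem
    obtain ⟨v, hv, hvb⟩ := Matrix.exists_vecMul_eq_zero_iff.2 hdet0
    choose a ha using fun i => Ideal.Quotient.mk_surjective (v i)
    refine hv (funext fun i => ?_)
    rw [← ha, Pi.zero_apply, Ideal.Quotient.eq_zero_iff_mem]
    have hcol : ∀ j, ∑ i, a i * b i j ∈ q := fun j => by
      rw [← Ideal.Quotient.eq_zero_iff_mem, map_sum]
      simpa [Matrix.vecMul, dotProduct, ha] using congrFun hvb j
    refine coeff_mem_of_regularAtImage hhseq.1 (hhgen ▸ hle.trans hgq) (hhgen ▸ hreg q hq) ?_ i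
    have h1 : ∑ i, a i * (hs i - ∑ j, b i j * gs (Fin.castLE hpn j)) ∈ q ^ 2 :=
      Ideal.sum_mem _ fun i _ => Ideal.mul_mem_left _ _ (Ideal.pow_right_mono hgq 2 (hcong i))
    have h2 : ∑ j, (∑ i, a i * b i j) * gs (Fin.castLE hpn j) ∈ q ^ 2 :=
      Ideal.sum_mem _ fun j _ => pow_two q ▸ Ideal.mul_mem_mul (hcol j) (hgq (hgmem _))
    convert add_mem h1 h2 using 1
    simp only [mul_sub, Finset.sum_sub_distrib, Finset.mul_sum, Finset.sum_mul]
    rw [Finset.sum_comm (γ := Fin p)]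
    simp [mul_assoc]
  have htor : ∀ c : Fin p → MvPolynomial (Fin m) k,
      ∑ j, c j * gs (Fin.castLE hpn j) ∈ torsionSet h g := by
    intro c
    refine ⟨Ideal.sum_mem _ fun j _ => Ideal.mul_mem_left _ _ (hgmem _), _, hdet, ?_⟩
    have hone : ∀ l, (Matrix.of b).det * gs (Fin.castLE hpn l) ∈ g ^ 2 ⊔ h := by
      intro l
      have hadj : ∑ j, (∑ i, (Matrix.of b).adjugate l i * b i j) * gs (Fin.castLE hpn j) =
          (Matrix.of b).det * gs (Fin.castLE hpn l) := by
        have hcoef : ∀ j, ∑ i, (Matrix.of b).adjugate l i * b i j =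
            if l = j then (Matrix.of b).det else 0 := fun j => by
          have := congrFun (congrFun (Matrix.adjugate_mul (Matrix.of b)) l) j
          simpa [Matrix.mul_apply, Matrix.one_apply] using this
        simp [hcoef]
      have h1 : ∑ i, (Matrix.of b).adjugate l i * hs i ∈ h :=
        Ideal.sum_mem _ fun i _ =>
          Ideal.mul_mem_left _ _ (hhgen ▸ Ideal.subset_span ⟨i, rfl⟩)
      have h2 : ∑ i, (Matrix.of b).adjugate l i *
          (hs i - ∑ j, b i j * gs (Fin.castLE hpn j)) ∈ g ^ 2 :=
        Ideal.sum_mem _ fun i _ => Ideal.mul_mem_left _ _ (hcong i)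
      convert sub_mem (Ideal.mem_sup_right (S := g ^ 2) h1) (Ideal.mem_sup_left h2) using 1
      rw [← hadj]
      simp only [mul_sub, Finset.sum_sub_distrib, Finset.mul_sum, Finset.sum_mul]
      rw [Finset.sum_comm]
      simp [mul_assoc]
    rw [Finset.mul_sum]
    refine Ideal.sum_mem _ fun j _ => ?_
    rw [mul_left_comm]
    exact Ideal.mul_mem_left _ _ (hone j)
  have hfree : ∀ c : Fin (n - p) → MvPolynomial (Fin m) k,
      (∑ j, c j * tailFam gs p j) ∈ torsionSet h g → ∀ j, c j ∈ g := by
    rintro c ⟨-, β, hβ, hmem⟩ j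
    obtain ⟨x, hx, y, hy, hxy⟩ := Submodule.mem_sup.1 hmem
    obtain ⟨a, rfl⟩ := Ideal.mem_span_range_iff_exists_fun.1 (hhgen ▸ hy)
    have hsq : β * (∑ j, c j * tailFam gs p j) -
        ∑ l, (∑ i, a i * b i l) * gs (Fin.castLE hpn l) ∈ g ^ 2 := by
      have h2 : ∑ i, a i * (hs i - ∑ j, b i j * gs (Fin.castLE hpn j)) ∈ g ^ 2 :=
        Ideal.sum_mem _ fun i _ => Ideal.mul_mem_left _ _ (hcong i)
      convert add_mem hx h2 using 1
      rw [← hxy]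
      simp only [mul_sub, Finset.sum_sub_distrib, Finset.mul_sum, Finset.sum_mul]
      rw [Finset.sum_comm (f := fun l i => a i * b i l * gs (Fin.castLE hpn l))]
      simp only [mul_assoc]
      ring
    let d : Fin n → MvPolynomial (Fin m) k := fun i =>
      if hi : (i : ℕ) < p then -∑ i', a i' * b i' ⟨i, hi⟩
      else β * c ⟨i - p, by have := i.isLt; omega⟩
    have hd : ∑ i, d i * gs i ∈ Ideal.span (Set.range gs) ^ 2 := by
      rw [← hggen]
      convert hsq using 1
      rw [sum_eq_sum_castLE_add_sum_tail hpn, Finset.mul_sum, sub_eq_neg_add,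
        ← Finset.sum_neg_distrib]
      congr 1
      · exact Finset.sum_congr rfl fun l _ => by simp [d]
      · exact Finset.sum_congr rfl fun l _ => by simp [d, tailFam, mul_assoc]
    have hj := coeff_mem_of_sum_mul_mem_sq hgseq.1 hd ⟨p + j, by have := j.isLt; omega⟩
    rw [← hggen] at hj
    simp only [d, Nat.not_lt.2 (Nat.le_add_right p j), dite_false, Nat.add_sub_cancel_left] at hj
    rw [← Ideal.Quotient.eq_zero_iff_mem, map_mul] at hj
    exact Ideal.Quotient.eq_zero_iff_mem.1 ((mul_left_mem_nonZeroDivisors_eq_zero_iff hβ).1 hj)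
  have htail : ∀ c : Fin (n - p) → MvPolynomial (Fin m) k,
      (∑ j, c j * tailFam gs p j) ∈ torsionSet h g →
        (∑ j, c j * tailFam gs p j) ∈ g ^ 2 ⊔ h := fun c hc =>
    Ideal.mem_sup_left (Ideal.sum_mem _ fun j _ =>
      pow_two g ▸ Ideal.mul_mem_mul (hfree c hc j) (hgmem _))
  have hsplit : ∀ f ∈ g, ∃ (c : Fin p → MvPolynomial (Fin m) k)
      (c' : Fin (n - p) → MvPolynomial (Fin m) k),
      f = ∑ j, c j * gs (Fin.castLE hpn j) + ∑ j, c' j * tailFam gs p j := by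
    intro f hf
    obtain ⟨c, rfl⟩ := Ideal.mem_span_range_iff_exists_fun.1 (hggen ▸ hf)
    exact ⟨_, _, sum_eq_sum_castLE_add_sum_tail hpn _⟩
  have hsub : ∀ x ∈ torsionSet h g, ∀ y ∈ torsionSet h g, x - y ∈ torsionSet h g := by
    rintro x ⟨hx, β, hβ, hβx⟩ y ⟨hy, γ, hγ, hγy⟩
    refine ⟨sub_mem hx hy, β * γ, by rw [map_mul]; exact mul_mem hβ hγ, ?_⟩
    rw [show β * γ * (x - y) = γ * (β * x) - β * (γ * y) by ring]
    exact sub_mem (Ideal.mul_mem_left _ _ hβx) (Ideal.mul_mem_left _ _ hγy)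
  refine ⟨hdet, fun j => ?_, fun f hf => ?_, fun f hf => ?_, hfree, htail⟩
  · simpa [Pi.single_apply] using htor (Pi.single j 1)
  · obtain ⟨c, c', rfl⟩ := hsplit f hf.1
    refine ⟨c, ?_⟩
    have h' := hsub _ hf _ (htor c)
    rw [add_sub_cancel_left] at h' ⊢
    exact htail c' h'
  · obtain ⟨c, c', rfl⟩ := hsplit f hf
    exact ⟨c', by rw [add_sub_cancel_right]; exact htor c⟩
end
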